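/- For all positive constants μ, κ, R, c_v and all M, m > 0 and K ≥ 1 there exist constants C > 0 and C₂ > 0, depending only on μ, κ, R, c_v, M, m, K, such that: whenever (v,u,θ) is a classical solution of the one-dimensional compressible Navier–Stokes system on ℝ whose initial data are (M,m)-bounded and which is K-volume-bounded, then for every T > 0: sup_{0 ≤ t ≤ T} ∫_ℝ ((θ(x,t) − 2)₊)² dx + ∫₀^T ∫_ℝ ( θ(x,t) u_x(x,t)² + θ_x(x,t)² ) dx dt ≤ C + C ∫₀^T sup_{x ∈ ℝ} ((θ(x,t) − 3/2)₊)² dt + C₂ ∫₀^T ∫_ℝ u(x,t)² u_x(x,t)² dx dt. -/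

import Mathlib

/-!
The estimate combines two energy balances.

* **Basic energy** (`IsStripSolution.basic_estimate`). Testing the equations with `u`, `1 - 1/v` and
  `1 - 1/θ` bounds `∫ u² dx` and `∫ θ dx` over `{θ ≥ 7/4}` for all times, and the dissipation
  `u_x² + θ_x²` on the region `θ ≤ 2`, by constants depending only on the data. As no lower bound
  for `θ` is available, `1 - 1/θ` is replaced by `(θ - 1)/(θ + δ)` and `δ → 0`.

* **Truncated temperature** (`IsStripSolution.truncated_balance`). Take a `C²` function `g` supported
  in `θ ≥ 7/4` and comparable to `θ` for `θ ≥ 2`, and `H` between multiples of `(θ - 2)₊²` and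
  `(θ - 7/4)₊²` with derivative `h ≤ g`, and consider the density `c_v H(θ) + u² g(θ)`. The momentum
  equation tested with `2 u g(θ)` yields the dissipation `2 μ g u_x²/v`, of which the viscous
  heating `μ h u_x²/v` consumes at most half. After Young's inequality the remaining gain consists
  of `g θ²`, `g₁ u² θ²` and `g₁ u² u_x²`, where `g₁` is the derivative of `g`.

On the support of `g` one has `θ ≤ 7 (θ - 3/2)₊`, so at each time the first two gains are at most
`sup (θ - 3/2)₊²` times the basic energy (`IsStripSolution.gain_le`). The dissipation on `θ ≥ 2` comes
from the truncated balance, that on `θ ≤ 2` from the basic energy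
(`IsStripSolution.dissipation_le`).

Both balances are instances of `balance_inequality`, which integrates `∂ₜΦ = A + ∂ₓB` over the strip
`ℝ × [0, T]`; the `H¹` and `H²` regularity assumptions make all terms integrable there, so that the
flux `B` does not contribute. To have all pointwise facts for every real time, solutions are frozen
outside `[0, T]` (`IsClassicalSolution.exists_isStripSolution`).
-/

open MeasureTheory Filter Set

noncomputable section

/-- Partial derivative in the spatial variable. -/
def pdx (f : ℝ → ℝ → ℝ) (x t : ℝ) : ℝ := deriv (fun y => f y t) x

/-- Partial derivative in the time variable. -/
def pdt (f : ℝ → ℝ → ℝ) (x t : ℝ) : ℝ := deriv (fun s => f x s) t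

/-- The `L²(ℝ)` norm, valued in `ℝ≥0∞`. -/
def L2 (f : ℝ → ℝ) : ENNReal := eLpNorm f 2 volume

/-- The `H¹(ℝ)` norm, valued in `ℝ≥0∞`. -/
def H1 (f : ℝ → ℝ) : ENNReal := L2 f + L2 (deriv f)

/-- The `H²(ℝ)` norm, valued in `ℝ≥0∞`. -/
def H2 (f : ℝ → ℝ) : ENNReal := L2 f + L2 (deriv f) + L2 (deriv (deriv f))

/-- A classical solution of the 1-D compressible Navier–Stokes system in Lagrangian
coordinates on `ℝ`, together with the regularity and far-field conditions. -/
structure IsClassicalSolution (μ κ R cv : ℝ) (v u θ : ℝ → ℝ → ℝ) : Prop where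
  v_pos : ∀ x t : ℝ, 0 ≤ t → 0 < v x t
  θ_pos : ∀ x t : ℝ, 0 ≤ t → 0 < θ x t
  smooth_x_v : ∀ t : ℝ, 0 ≤ t → ContDiff ℝ 2 (fun x => v x t)
  smooth_x_u : ∀ t : ℝ, 0 ≤ t → ContDiff ℝ 2 (fun x => u x t)
  smooth_x_θ : ∀ t : ℝ, 0 ≤ t → ContDiff ℝ 2 (fun x => θ x t)
  smooth_t_v : ∀ x t : ℝ, 0 ≤ t → DifferentiableAt ℝ (fun s => v x s) t
  smooth_t_u : ∀ x t : ℝ, 0 ≤ t → DifferentiableAt ℝ (fun s => u x s) t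
  smooth_t_θ : ∀ x t : ℝ, 0 ≤ t → DifferentiableAt ℝ (fun s => θ x s) t
  eq_mass : ∀ x t : ℝ, 0 ≤ t → pdt v x t = pdx u x t
  eq_momentum : ∀ x t : ℝ, 0 ≤ t →
    pdt u x t + pdx (fun y s => R * θ y s / v y s) x t
      = μ * pdx (fun y s => pdx u y s / v y s) x t
  eq_energy : ∀ x t : ℝ, 0 ≤ t →
    cv * pdt θ x t + (R * θ x t / v x t) * pdx u x t
      = κ * pdx (fun y s => pdx θ y s / v y s) x t + μ * (pdx u x t) ^ 2 / v x t
  reg_H1 : ∀ T : ℝ, 0 ≤ T → ∃ B : ℝ, ∀ t ∈ Icc (0 : ℝ) T,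
    H1 (fun x => v x t - 1) + H1 (fun x => u x t) + H1 (fun x => θ x t - 1)
      ≤ ENNReal.ofReal B
  reg_H2 : ∀ T : ℝ, 0 < T →
    (∫⁻ t in Icc (0 : ℝ) T,
      (H2 (fun x => u x t) ^ 2 + H2 (fun x => θ x t - 1) ^ 2)) < ⊤
  farfield_v : ∀ t : ℝ, 0 ≤ t → Tendsto (fun x => v x t) (cocompact ℝ) (nhds 1)
  farfield_u : ∀ t : ℝ, 0 ≤ t → Tendsto (fun x => u x t) (cocompact ℝ) (nhds 0)
  farfield_θ : ∀ t : ℝ, 0 ≤ t → Tendsto (fun x => θ x t) (cocompact ℝ) (nhds 1)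

/-- The initial data of `(v, u, θ)` are `(M, m)`-bounded. -/
def InitBounded (M m : ℝ) (v u θ : ℝ → ℝ → ℝ) : Prop :=
  H1 (fun x => v x 0 - 1) + H1 (fun x => u x 0) + H1 (fun x => θ x 0 - 1)
      ≤ ENNReal.ofReal M
    ∧ (∀ x : ℝ, m ≤ v x 0) ∧ (∀ x : ℝ, m ≤ θ x 0)

/-- The solution is `K`-volume-bounded. -/
def VolBounded (K : ℝ) (v : ℝ → ℝ → ℝ) : Prop :=
  ∀ x t : ℝ, 0 ≤ t → K⁻¹ ≤ v x t ∧ v x t ≤ K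

end

/-! ### Balance laws on a strip -/

/-- Space-time measure on the strip `ℝ × [0, T]`, points written `(x, t)`. -/
noncomputable abbrev stripMeasure (T : ℝ) : Measure (ℝ × ℝ) :=
  (volume : Measure ℝ).prod ((volume : Measure ℝ).restrict (Icc 0 T))

/-- Integrated balance law: if `∂ₜΦ = A + ∂ₓB` and all quantities are integrable on the strip, the
flux `B` disappears after integration in `x`. -/
lemma balance_identity {T : ℝ} (hT : 0 ≤ T) {Φ Ψ A B Bx : ℝ → ℝ → ℝ}
    (hc : ∀ x, ContinuousOn (Φ x) (Icc 0 T))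
    (hd : ∀ x, ∀ t ∈ Ioo 0 T, HasDerivAt (Φ x) (Ψ x t) t)
    (hB : ∀ x t, HasDerivAt (fun y => B y t) (Bx x t) x)
    (hΨ : Integrable (fun p : ℝ × ℝ => Ψ p.1 p.2) (stripMeasure T))
    (hA : Integrable (fun p : ℝ × ℝ => A p.1 p.2) (stripMeasure T))
    (hBi : Integrable (fun p : ℝ × ℝ => B p.1 p.2) (stripMeasure T))
    (heq : ∀ x t, Ψ x t = A x t + Bx x t)
    (h0 : Integrable (fun x => Φ x 0)) :
    Integrable (fun x => Φ x T) ∧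
      ∫ x, Φ x T = (∫ x, Φ x 0) + ∫ p, A p.1 p.2 ∂(stripMeasure T) := by
  have hBx : Integrable (fun p : ℝ × ℝ => Bx p.1 p.2) (stripMeasure T) := by
    refine (hΨ.sub hA).congr (Eventually.of_forall fun p => ?_)
    simp [heq]
  have hBx0 : ∫ p, Bx p.1 p.2 ∂(stripMeasure T) = 0 := by
    rw [integral_prod_symm _ hBx]
    refine integral_eq_zero_of_ae ?_
    filter_upwards [hBx.prod_left_ae, hBi.prod_left_ae] with t h1 h2
    exact integral_eq_zero_of_hasDerivAt_of_integrable (fun x => hB x t) h1 h2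
  have hae : ∀ᵐ x : ℝ, Φ x T = Φ x 0 + ∫ t in Icc 0 T, Ψ x t := by
    filter_upwards [hΨ.prod_right_ae] with x hx
    have hI : IntervalIntegrable (Ψ x) volume 0 T := by
      rw [intervalIntegrable_iff_integrableOn_Icc_of_le hT]
      exact hx
    have := intervalIntegral.integral_eq_sub_of_hasDerivAt_of_le hT (hc x) (hd x) hI
    rw [intervalIntegral.integral_of_le hT, ← integral_Icc_eq_integral_Ioc] at this
    rw [this]; ring
  have hI := hΨ.integral_prod_left
  have hsum := h0.add hI
  refine ⟨hsum.congr ?_, ?_⟩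
  · filter_upwards [hae] with x hx
    simp [hx]
  · rw [integral_congr_ae hae, integral_add h0 hI, ← integral_prod _ hΨ]
    have : ∫ p, Ψ p.1 p.2 ∂(stripMeasure T)
        = (∫ p, A p.1 p.2 ∂(stripMeasure T)) + ∫ p, Bx p.1 p.2 ∂(stripMeasure T) := by
      rw [← integral_add hA hBx]
      exact integral_congr_ae (Eventually.of_forall fun p => heq _ _)
    rw [this, hBx0, add_zero]

/-- Inequality form of `balance_identity`: a source `A ≤ N - P` with gain `N` and dissipation
`P` gives the usual energy inequality. The gain is allowed to have infinite integral. -/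
lemma balance_inequality {T : ℝ} (hT : 0 ≤ T) {Φ Ψ A B Bx N P : ℝ → ℝ → ℝ}
    (hc : ∀ x, ContinuousOn (Φ x) (Icc 0 T))
    (hd : ∀ x, ∀ t ∈ Ioo 0 T, HasDerivAt (Φ x) (Ψ x t) t)
    (hB : ∀ x t, HasDerivAt (fun y => B y t) (Bx x t) x)
    (hΨ : Integrable (fun p : ℝ × ℝ => Ψ p.1 p.2) (stripMeasure T))
    (hA : Integrable (fun p : ℝ × ℝ => A p.1 p.2) (stripMeasure T))
    (hBi : Integrable (fun p : ℝ × ℝ => B p.1 p.2) (stripMeasure T))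
    (heq : ∀ x t, Ψ x t = A x t + Bx x t)
    (h0 : Integrable (fun x => Φ x 0))
    (hΦ : ∀ x t, 0 ≤ Φ x t) (hN : ∀ x t, 0 ≤ N x t) (hP : ∀ x t, 0 ≤ P x t)
    (hNm : Measurable fun p : ℝ × ℝ => N p.1 p.2) (hPm : Measurable fun p : ℝ × ℝ => P p.1 p.2)
    (hle : ∀ x t, A x t ≤ N x t - P x t) :
    (∫⁻ x, ENNReal.ofReal (Φ x T)) + ∫⁻ p, ENNReal.ofReal (P p.1 p.2) ∂(stripMeasure T)
      ≤ (∫⁻ x, ENNReal.ofReal (Φ x 0)) +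
        ∫⁻ p, ENNReal.ofReal (N p.1 p.2) ∂(stripMeasure T) := by
  by_cases hfin : ∫⁻ p, ENNReal.ofReal (N p.1 p.2) ∂(stripMeasure T) = ⊤
  · rw [hfin]; simp
  obtain ⟨hiT, hid⟩ := balance_identity hT hc hd hB hΨ hA hBi heq h0
  have hNi : Integrable (fun p : ℝ × ℝ => N p.1 p.2) (stripMeasure T) :=
    (lintegral_ofReal_ne_top_iff_integrable hNm.aestronglyMeasurable
      (Eventually.of_forall fun p => hN _ _)).1 hfin
  have hPi : Integrable (fun p : ℝ × ℝ => P p.1 p.2) (stripMeasure T) := by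
    refine (hNi.sub hA).mono' hPm.aestronglyMeasurable (Eventually.of_forall fun p => ?_)
    rw [Real.norm_of_nonneg (hP _ _)]
    have := hle p.1 p.2
    simp only [Pi.sub_apply]
    linarith
  have hmono : ∫ p, A p.1 p.2 ∂(stripMeasure T)
      ≤ (∫ p, N p.1 p.2 ∂(stripMeasure T)) - ∫ p, P p.1 p.2 ∂(stripMeasure T) := by
    rw [← integral_sub hNi hPi]
    exact integral_mono hA (hNi.sub hPi) fun p => hle _ _
  rw [← ofReal_integral_eq_lintegral_ofReal hiT (Eventually.of_forall fun x => hΦ _ _),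
    ← ofReal_integral_eq_lintegral_ofReal h0 (Eventually.of_forall fun x => hΦ _ _),
    ← ofReal_integral_eq_lintegral_ofReal hNi (Eventually.of_forall fun x => hN _ _),
    ← ofReal_integral_eq_lintegral_ofReal hPi (Eventually.of_forall fun x => hP _ _),
    ← ENNReal.ofReal_add (integral_nonneg fun x => hΦ _ _) (integral_nonneg fun x => hP _ _),
    ← ENNReal.ofReal_add (integral_nonneg fun x => hΦ _ _) (integral_nonneg fun x => hN _ _)]
  exact ENNReal.ofReal_le_ofReal (by linarith)

/-! ### Square integrability and joint measurability -/

lemma lintegral_sq_eq_L2 (f : ℝ → ℝ) : ∫⁻ x, ENNReal.ofReal (f x ^ 2) = L2 f ^ 2 := by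
  have h := eLpNorm_nnreal_pow_eq_lintegral (f := f) (μ := volume) (p := 2) (by norm_num)
  have h2 : L2 f ^ 2 = eLpNorm f ((2 : NNReal) : ENNReal) volume ^ ((2 : NNReal) : ℝ) := by
    simp [L2]
  rw [h2, h]
  refine lintegral_congr fun x => ?_
  rw [← sq_abs, ENNReal.ofReal_pow (abs_nonneg _), ← Real.norm_eq_abs, ofReal_norm]
  simp

/-- A sum-of-squares form of the embedding `H¹(ℝ) ⊂ L^∞(ℝ)`. -/
lemma sq_le_of_H1 {f f' : ℝ → ℝ} (hf : ∀ x, HasDerivAt f (f' x) x)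
    (hlim : Tendsto f (cocompact ℝ) (nhds 0)) {a b : ℝ} (ha : 0 ≤ a) (hb : 0 ≤ b)
    (hfm : Measurable f')
    (h1 : ∫⁻ x, ENNReal.ofReal (f x ^ 2) ≤ ENNReal.ofReal a)
    (h2 : ∫⁻ x, ENNReal.ofReal (f' x ^ 2) ≤ ENNReal.ofReal b) (x : ℝ) :
    f x ^ 2 ≤ a + b := by
  have hfc : Continuous f := continuous_iff_continuousAt.2 fun x => (hf x).continuousAt
  have i1 : Integrable fun x => f x ^ 2 :=
    (lintegral_ofReal_ne_top_iff_integrable (hfc.pow 2).aestronglyMeasurable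
      (Eventually.of_forall fun p => sq_nonneg _)).1 (ne_top_of_le_ne_top (by simp) h1)
  have i2 : Integrable fun x => f' x ^ 2 :=
    (lintegral_ofReal_ne_top_iff_integrable (hfm.pow_const 2).aestronglyMeasurable
      (Eventually.of_forall fun p => sq_nonneg _)).1 (ne_top_of_le_ne_top (by simp) h2)
  have e1 : ∫ x, f x ^ 2 ≤ a := by
    rw [← ENNReal.ofReal_le_ofReal_iff ha, ofReal_integral_eq_lintegral_ofReal i1
      (Eventually.of_forall fun p => sq_nonneg _)]
    exact h1
  have e2 : ∫ x, f' x ^ 2 ≤ b := by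
    rw [← ENNReal.ofReal_le_ofReal_iff hb, ofReal_integral_eq_lintegral_ofReal i2
      (Eventually.of_forall fun p => sq_nonneg _)]
    exact h2
  have i3 : Integrable fun x => 2 * f x * f' x := by
    refine (i1.add i2).mono' ((hfc.measurable.const_mul 2).mul hfm).aestronglyMeasurable
      (Eventually.of_forall fun p => ?_)
    simp only [Pi.add_apply, Real.norm_eq_abs]
    rw [abs_le]
    constructor <;> nlinarith [sq_nonneg (f p + f' p), sq_nonneg (f p - f' p)]
  have hd : ∀ x, HasDerivAt (fun x => f x ^ 2) (2 * f x * f' x) x := fun x => by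
    simpa using (hf x).fun_pow 2
  have hl : Tendsto (fun x => f x ^ 2) atBot (nhds 0) := by
    have := (hlim.mono_left atBot_le_cocompact).pow 2
    simpa using this
  have key := integral_Iic_of_hasDerivAt_of_tendsto (a := x)
    (hd x).continuousAt.continuousWithinAt (fun y _ => hd y) i3.integrableOn hl
  calc f x ^ 2 = ∫ y in Iic x, 2 * f y * f' y := by rw [key]; ring
    _ ≤ ∫ y in Iic x, (f y ^ 2 + f' y ^ 2) := by
        refine integral_mono i3.integrableOn (i1.add i2).integrableOn fun y => ?_
        simp only
        nlinarith [sq_nonneg (f y - f' y)]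
    _ ≤ ∫ y, (f y ^ 2 + f' y ^ 2) :=
        setIntegral_le_integral (i1.add i2) (Eventually.of_forall fun y => by
          simp only [Pi.zero_apply]; positivity)
    _ ≤ a + b := by rw [integral_add i1 i2]; linarith

/-- The spatial derivative of a jointly measurable function is jointly measurable, as a limit of
difference quotients. -/
lemma measurable_of_hasDerivAt {f f' : ℝ → ℝ → ℝ} (hf : Measurable fun p : ℝ × ℝ => f p.1 p.2)
    (hd : ∀ x t, HasDerivAt (fun y => f y t) (f' x t) x) :
    Measurable fun p : ℝ × ℝ => f' p.1 p.2 := by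
  have hseq : Tendsto (fun n : ℕ => (1 : ℝ) / ((n : ℝ) + 1)) atTop (nhdsWithin 0 {0}ᶜ) := by
    refine tendsto_nhdsWithin_iff.2 ⟨tendsto_one_div_add_atTop_nhds_zero_nat, ?_⟩
    refine Eventually.of_forall fun n => ?_
    simp only [mem_compl_iff, mem_singleton_iff]
    positivity
  refine measurable_of_tendsto_metrizable
    (f := fun (n : ℕ) (p : ℝ × ℝ) => ((1 : ℝ) / ((n : ℝ) + 1))⁻¹ *
      (f (p.1 + 1 / ((n : ℝ) + 1)) p.2 - f p.1 p.2)) (fun n => ?_) ?_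
  · refine (Measurable.sub ?_ hf).const_mul _
    exact hf.comp ((measurable_fst.add_const _).prodMk measurable_snd)
  · rw [tendsto_pi_nhds]
    intro p
    have := (hasDerivAt_iff_tendsto_slope_zero.1 (hd p.1 p.2)).comp hseq
    simpa [Function.comp_def] using this

lemma memLp_two_strip {T : ℝ} {f : ℝ → ℝ → ℝ} (hf : Measurable fun p : ℝ × ℝ => f p.1 p.2)
    (h : ∫⁻ t in Icc 0 T, ∫⁻ x, ENNReal.ofReal (f x t ^ 2) < ⊤) :
    MemLp (fun p : ℝ × ℝ => f p.1 p.2) 2 (stripMeasure T) := by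
  rw [memLp_two_iff_integrable_sq hf.aestronglyMeasurable]
  refine (lintegral_ofReal_ne_top_iff_integrable (hf.pow_const 2).aestronglyMeasurable
      (Eventually.of_forall fun p => sq_nonneg _)).1 ?_
  rw [lintegral_prod_symm' _ (hf.pow_const 2).ennreal_ofReal]
  exact h.ne

/-! ### Truncation functions -/

/-- Composing with the shifted positive part preserves differentiability for profiles vanishing to
first order at the origin. -/
lemma hasDerivAt_comp_posPart {f f' : ℝ → ℝ} (a : ℝ) (hf : ∀ s, 0 ≤ s → HasDerivAt f (f' s) s)
    (h0 : f 0 = 0) (h0' : f' 0 = 0) (y : ℝ) :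
    HasDerivAt (fun y => f (max (y - a) 0)) (f' (max (y - a) 0)) y := by
  rcases lt_trichotomy y a with h | h | h
  · have he : (fun y => f (max (y - a) 0)) =ᶠ[nhds y] fun _ => 0 := by
      filter_upwards [Iio_mem_nhds h] with z hz
      rw [max_eq_right (by linarith [mem_Iio.1 hz]), h0]
    rw [max_eq_right (by linarith), h0']
    exact (hasDerivAt_const y (0 : ℝ)).congr_of_eventuallyEq he
  · subst h
    simp only [sub_self, max_self, h0']
    have h1 : HasDerivAt f 0 0 := by simpa [h0'] using hf 0 le_rfl
    rw [hasDerivAt_iff_isLittleO] at h1 ⊢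
    simp only [h0, smul_zero, sub_zero, sub_self, max_self] at h1 ⊢
    have ht : Tendsto (fun z : ℝ => max (z - y) 0) (nhds y) (nhds 0) := by
      have : Continuous fun z : ℝ => max (z - y) 0 := by fun_prop
      simpa using this.tendsto y
    refine (h1.comp_tendsto ht).trans_isBigO (Asymptotics.isBigO_of_le _ fun z => ?_)
    simp only [Function.comp, Real.norm_eq_abs]
    rw [abs_of_nonneg (le_max_right _ _)]
    exact max_le (le_abs_self _) (abs_nonneg _)
  · have he : (fun y => f (max (y - a) 0)) =ᶠ[nhds y] fun y => f (y - a) := by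
      filter_upwards [Ioi_mem_nhds h] with z hz
      rw [max_eq_left (by linarith [mem_Ioi.1 hz])]
    rw [max_eq_left (by linarith)]
    exact ((hf (y - a) (by linarith)).comp_sub_const y a).congr_of_eventuallyEq he

/-- A `C²` convex truncation `g` of linear growth and a companion `H` with quadratic growth and
derivative `h`, all supported in `{θ > 7/4}`. `g` replaces the positive part `(θ - 2)₊`, which is
not smooth enough to be multiplied by `u²` and differentiated in time. -/
structure IsTruncation (g g₁ g₂ H h h₁ : ℝ → ℝ) : Prop where
  dg : ∀ y, HasDerivAt g (g₁ y) y
  dg₁ : ∀ y, HasDerivAt g₁ (g₂ y) y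
  dH : ∀ y, HasDerivAt H (h y) y
  dh : ∀ y, HasDerivAt h (h₁ y) y
  cg₂ : Continuous g₂
  ch₁ : Continuous h₁
  g_nonneg : ∀ y, 0 ≤ g y
  g_le : ∀ y, g y ≤ max (y - 7 / 4) 0
  g₁_nonneg : ∀ y, 0 ≤ g₁ y
  g₁_le : ∀ y, g₁ y ≤ 1
  g₁_zero : ∀ y, y ≤ 7 / 4 → g₁ y = 0
  g₂_nonneg : ∀ y, 0 ≤ g₂ y
  g₂_le : ∀ y, g₂ y ≤ 6
  h_nonneg : ∀ y, 0 ≤ h y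
  h_le : ∀ y, h y ≤ g y
  h₁_ge : ∀ y, g₁ y ≤ 2 * h₁ y
  h₁_le : ∀ y, h₁ y ≤ 3
  g_ge : ∀ y, 2 ≤ y → y ≤ 200 * g y
  g₁_ge : ∀ y, 2 ≤ y → 1 ≤ 25 * g₁ y
  H_le : ∀ y, H y ≤ max (y - 7 / 4) 0 ^ 2
  H_ge : ∀ y, max (y - 2) 0 ^ 2 ≤ 100 * H y

/-- The explicit truncation, with `s = (θ - 7/4)₊`: `g = s³/(1+s)²` and `H = s⁴/(4(1+s)²)`. -/
lemma exists_truncation : ∃ g g₁ g₂ H h h₁ : ℝ → ℝ, IsTruncation g g₁ g₂ H h h₁ := by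
  have hs : ∀ y : ℝ, 0 ≤ max (y - 7 / 4) 0 := fun y => le_max_right _ _
  have hs2 : ∀ y : ℝ, 2 ≤ y → max (y - 7 / 4) 0 = y - 7 / 4 := fun y hy =>
    max_eq_left (by linarith)
  have hne : ∀ s : ℝ, 0 ≤ s → (1 + s) ≠ 0 := fun s h => by positivity
  have d1 : ∀ s : ℝ, HasDerivAt (fun s : ℝ => 1 + s) 1 s := fun s => by
    simpa using (hasDerivAt_id s).const_add 1
  refine ⟨fun y => (fun s : ℝ => s ^ 3 / (1 + s) ^ 2) (max (y - 7 / 4) 0),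
    fun y => (fun s : ℝ => s ^ 2 * (s + 3) / (1 + s) ^ 3) (max (y - 7 / 4) 0),
    fun y => (fun s : ℝ => 6 * s / (1 + s) ^ 4) (max (y - 7 / 4) 0),
    fun y => (fun s : ℝ => s ^ 4 / (4 * (1 + s) ^ 2)) (max (y - 7 / 4) 0),
    fun y => (fun s : ℝ => s ^ 3 * (s + 2) / (2 * (1 + s) ^ 3)) (max (y - 7 / 4) 0),
    fun y => (fun s : ℝ => s ^ 2 * (s ^ 2 + 4 * s + 6) / (2 * (1 + s) ^ 4)) (max (y - 7 / 4) 0),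
    ?_⟩
  constructor
  · refine hasDerivAt_comp_posPart (f := fun s : ℝ => s ^ 3 / (1 + s) ^ 2)
      (f' := fun s : ℝ => s ^ 2 * (s + 3) / (1 + s) ^ 3) _
      (fun s h => ?_) (by simp) (by simp)
    have hne' := hne s h
    refine ((hasDerivAt_pow 3 s).fun_div ((d1 s).fun_pow 2) (pow_ne_zero 2 hne')).congr_deriv ?_
    simp
    field_simp
    ring
  · refine hasDerivAt_comp_posPart (f := fun s : ℝ => s ^ 2 * (s + 3) / (1 + s) ^ 3)
      (f' := fun s : ℝ => 6 * s / (1 + s) ^ 4) _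
      (fun s h => ?_) (by simp) (by simp)
    have hne' := hne s h
    refine (((hasDerivAt_pow 2 s).fun_mul ((hasDerivAt_id s).add_const 3)).fun_div
      ((d1 s).fun_pow 3) (pow_ne_zero 3 hne')).congr_deriv ?_
    simp
    field_simp
    ring
  · refine hasDerivAt_comp_posPart (f := fun s : ℝ => s ^ 4 / (4 * (1 + s) ^ 2))
      (f' := fun s : ℝ => s ^ 3 * (s + 2) / (2 * (1 + s) ^ 3)) _
      (fun s h => ?_) (by simp) (by simp)
    have hne' := hne s h
    refine ((hasDerivAt_pow 4 s).fun_div (((d1 s).fun_pow 2).const_mul 4)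
      (mul_ne_zero four_ne_zero (pow_ne_zero 2 hne'))).congr_deriv ?_
    simp
    field_simp
    ring
  · refine hasDerivAt_comp_posPart (f := fun s : ℝ => s ^ 3 * (s + 2) / (2 * (1 + s) ^ 3))
      (f' := fun s : ℝ => s ^ 2 * (s ^ 2 + 4 * s + 6) / (2 * (1 + s) ^ 4)) _
      (fun s h => ?_) (by simp) (by simp)
    have hne' := hne s h
    refine (((hasDerivAt_pow 3 s).fun_mul ((hasDerivAt_id s).add_const 2)).fun_div
      (((d1 s).fun_pow 3).const_mul 2) (mul_ne_zero two_ne_zero (pow_ne_zero 3 hne'))).congr_deriv ?_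
    simp
    field_simp
    ring
  · refine Continuous.div (by fun_prop) (by fun_prop) fun y => pow_ne_zero _ (hne _ (hs y))
  · refine Continuous.div (by fun_prop) (by fun_prop) fun y =>
      mul_ne_zero two_ne_zero (pow_ne_zero _ (hne _ (hs y)))
  · intro y; have := hs y; positivity
  · intro y
    have h := hs y
    generalize max (y - 7 / 4) 0 = s at h
    simp only
    rw [div_le_iff₀ (by positivity)]
    nlinarith [pow_nonneg h 3, pow_nonneg h 2]
  · intro y; have := hs y; positivity
  · intro y
    have h := hs y
    generalize max (y - 7 / 4) 0 = s at h
    simp only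
    rw [div_le_iff₀ (by positivity)]
    nlinarith [pow_nonneg h 3, pow_nonneg h 2]
  · intro y hy
    simp only
    rw [max_eq_right (by linarith)]; simp
  · intro y; have := hs y; positivity
  · intro y
    have h := hs y
    generalize max (y - 7 / 4) 0 = s at h
    simp only
    rw [div_le_iff₀ (by positivity)]
    nlinarith [pow_nonneg h 3, pow_nonneg h 2, pow_nonneg h 4]
  · intro y; have := hs y; positivity
  · intro y
    have h := hs y
    generalize max (y - 7 / 4) 0 = s at h
    simp only
    rw [div_le_div_iff₀ (by positivity) (by positivity)]
    have : s ^ 3 * (2 * (1 + s) ^ 3) - s ^ 3 * (s + 2) * (1 + s) ^ 2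
      = s ^ 4 * (1 + s) ^ 2 := by ring
    have h2 : 0 ≤ s ^ 4 * (1 + s) ^ 2 := by positivity
    linarith
  · intro y
    have h := hs y
    generalize max (y - 7 / 4) 0 = s at h
    simp only
    have : 2 * (s ^ 2 * (s ^ 2 + 4 * s + 6) / (2 * (1 + s) ^ 4)) - s ^ 2 * (s + 3) / (1 + s) ^ 3
        = 3 * s ^ 2 / (1 + s) ^ 4 := by
      have := hne s h
      field_simp
      ring
    have h2 : 0 ≤ 3 * s ^ 2 / (1 + s) ^ 4 := by positivity
    linarith
  · intro y
    have h := hs y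
    generalize max (y - 7 / 4) 0 = s at h
    simp only
    rw [div_le_iff₀ (by positivity)]
    nlinarith [pow_nonneg h 3, pow_nonneg h 2, pow_nonneg h 4]
  · intro y hy
    simp only
    rw [hs2 y hy, mul_div_assoc', le_div_iff₀ (by nlinarith)]
    obtain ⟨z, hz, rfl⟩ : ∃ z : ℝ, 0 ≤ z ∧ y = z + 2 := ⟨y - 2, by linarith, by ring⟩
    nlinarith [pow_nonneg hz 3, pow_nonneg hz 2]
  · intro y hy
    simp only
    rw [hs2 y hy, mul_div_assoc', le_div_iff₀ (by apply pow_pos; linarith)]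
    obtain ⟨z, hz, rfl⟩ : ∃ z : ℝ, 0 ≤ z ∧ y = z + 2 := ⟨y - 2, by linarith, by ring⟩
    nlinarith [pow_nonneg hz 3, pow_nonneg hz 2]
  · intro y
    have h := hs y
    generalize max (y - 7 / 4) 0 = s at h
    simp only
    rw [div_le_iff₀ (by positivity)]
    nlinarith [pow_nonneg h 3, pow_nonneg h 2, pow_nonneg h 4]
  · intro y
    simp only
    rcases le_total y 2 with hy | hy
    · rw [max_eq_right (by linarith)]
      have := hs y
      simp only [ne_eq, OfNat.ofNat_ne_zero, not_false_eq_true, zero_pow]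
      positivity
    · rw [hs2 y hy, max_eq_left (by linarith), mul_div_assoc', le_div_iff₀ (by nlinarith)]
      obtain ⟨z, hz, rfl⟩ : ∃ z : ℝ, 0 ≤ z ∧ y = z + 2 := ⟨y - 2, by linarith, by ring⟩
      ring_nf
      nlinarith [pow_nonneg hz 3, pow_nonneg hz 2, pow_nonneg hz 4]

/-! ### Solutions on a strip -/

/-- The acceleration `uₜ` prescribed by the momentum equation, with the spatial derivatives
expanded. -/
noncomputable def accelOf (μ R v u_xx u_x v_x θ θ_x : ℝ) : ℝ :=
  μ * (u_xx / v - u_x * v_x / v ^ 2) - R * (θ_x / v - θ * v_x / v ^ 2)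

/-- The heating rate `c_v θₜ` prescribed by the energy equation, with the spatial derivatives
expanded. -/
noncomputable def heatOf (μ κ R v u_x v_x θ θ_x θ_xx : ℝ) : ℝ :=
  κ * (θ_xx / v - θ_x * v_x / v ^ 2) + μ * u_x ^ 2 / v - R * θ / v * u_x

/-- What the energy estimates use of a solution on `ℝ × [0, T]`. The functions are defined for all
times (in the application they are frozen outside `[0, T]`), so that all pointwise facts hold
without restriction; the evolution equations are only required for `0 < t < T`. The spatial
derivatives are separate arguments. -/
structure IsStripSolution (μ κ R cv K T b : ℝ) (v u θ v_x u_x θ_x u_xx θ_xx : ℝ → ℝ → ℝ) :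
    Prop where
  v_lo : ∀ x t, K⁻¹ ≤ v x t
  v_hi : ∀ x t, v x t ≤ K
  θ_pos : ∀ x t, 0 < θ x t
  u_bd : ∀ x t, |u x t| ≤ b
  θ_le : ∀ x t, θ x t ≤ b
  dv_x : ∀ x t, HasDerivAt (fun y => v y t) (v_x x t) x
  du_x : ∀ x t, HasDerivAt (fun y => u y t) (u_x x t) x
  dθ_x : ∀ x t, HasDerivAt (fun y => θ y t) (θ_x x t) x
  du_xx : ∀ x t, HasDerivAt (fun y => u_x y t) (u_xx x t) x
  dθ_xx : ∀ x t, HasDerivAt (fun y => θ_x y t) (θ_xx x t) x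
  cont_v : ∀ x, Continuous (v x)
  cont_u : ∀ x, Continuous (u x)
  cont_θ : ∀ x, Continuous (θ x)
  dv_t : ∀ x, ∀ t ∈ Ioo 0 T, HasDerivAt (v x) (u_x x t) t
  du_t : ∀ x, ∀ t ∈ Ioo 0 T, HasDerivAt (u x)
    (accelOf μ R (v x t) (u_xx x t) (u_x x t) (v_x x t) (θ x t) (θ_x x t)) t
  dθ_t : ∀ x, ∀ t ∈ Ioo 0 T, HasDerivAt (θ x)
    (heatOf μ κ R (v x t) (u_x x t) (v_x x t) (θ x t) (θ_x x t) (θ_xx x t) / cv) t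
  meas_v : Measurable fun p : ℝ × ℝ => v p.1 p.2
  meas_u : Measurable fun p : ℝ × ℝ => u p.1 p.2
  meas_θ : Measurable fun p : ℝ × ℝ => θ p.1 p.2
  mv : MemLp (fun p : ℝ × ℝ => v p.1 p.2 - 1) 2 (stripMeasure T)
  mv_x : MemLp (fun p : ℝ × ℝ => v_x p.1 p.2) 2 (stripMeasure T)
  mu : MemLp (fun p : ℝ × ℝ => u p.1 p.2) 2 (stripMeasure T)
  mu_x : MemLp (fun p : ℝ × ℝ => u_x p.1 p.2) 2 (stripMeasure T)
  mu_xx : MemLp (fun p : ℝ × ℝ => u_xx p.1 p.2) 2 (stripMeasure T)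
  mθ : MemLp (fun p : ℝ × ℝ => θ p.1 p.2 - 1) 2 (stripMeasure T)
  mθ_x : MemLp (fun p : ℝ × ℝ => θ_x p.1 p.2) 2 (stripMeasure T)
  mθ_xx : MemLp (fun p : ℝ × ℝ => θ_xx p.1 p.2) 2 (stripMeasure T)

section integrability

variable {α : Type*} [MeasurableSpace α] {ν : Measure α} {f g : α → ℝ}

lemma integrable_two_two (hf : MemLp f 2 ν) (hg : MemLp g 2 ν) :
    Integrable (fun p => f p * g p) ν :=
  memLp_one_iff_integrable.1 (hg.mul' hf)

lemma integrable_top_mul (hf : MemLp f ⊤ ν) (hg : Integrable g ν) :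
    Integrable (fun p => f p * g p) ν :=
  memLp_one_iff_integrable.1 ((memLp_one_iff_integrable.2 hg).mul' hf)

lemma memLp_top_mul (hf : MemLp f ⊤ ν) (hg : MemLp g ⊤ ν) : MemLp (fun p => f p * g p) ⊤ ν :=
  hg.mul' hf

lemma memLp_top_mul_two (hf : MemLp f ⊤ ν) (hg : MemLp g 2 ν) : MemLp (fun p => f p * g p) 2 ν :=
  hg.mul' hf

end integrability

namespace IsStripSolution

variable {μ κ R cv K T b : ℝ} {v u θ v_x u_x θ_x u_xx θ_xx : ℝ → ℝ → ℝ}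

lemma v_pos (S : IsStripSolution μ κ R cv K T b v u θ v_x u_x θ_x u_xx θ_xx)
    (hK : 0 < K) (x t : ℝ) : 0 < v x t := lt_of_lt_of_le (inv_pos.2 hK) (S.v_lo x t)

lemma inv_v_le (S : IsStripSolution μ κ R cv K T b v u θ v_x u_x θ_x u_xx θ_xx)
    (hK : 0 < K) (x t : ℝ) : (v x t)⁻¹ ≤ K :=
  (inv_le_comm₀ (S.v_pos hK x t) hK).2 (S.v_lo x t)

lemma le_inv_v (S : IsStripSolution μ κ R cv K T b v u θ v_x u_x θ_x u_xx θ_xx)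
    (hK : 0 < K) (x t : ℝ) : K⁻¹ ≤ (v x t)⁻¹ :=
  inv_anti₀ (S.v_pos hK x t) (S.v_hi x t)

lemma top_inv_v (S : IsStripSolution μ κ R cv K T b v u θ v_x u_x θ_x u_xx θ_xx)
    (hK : 0 < K) : MemLp (fun p : ℝ × ℝ => (v p.1 p.2)⁻¹) ⊤ (stripMeasure T) := by
  refine memLp_top_of_bound S.meas_v.inv.aestronglyMeasurable K (Eventually.of_forall fun p => ?_)
  rw [Real.norm_of_nonneg (inv_nonneg.2 (S.v_pos hK _ _).le)]
  exact S.inv_v_le hK _ _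

lemma top_u (S : IsStripSolution μ κ R cv K T b v u θ v_x u_x θ_x u_xx θ_xx) :
    MemLp (fun p : ℝ × ℝ => u p.1 p.2) ⊤ (stripMeasure T) :=
  memLp_top_of_bound S.meas_u.aestronglyMeasurable b (Eventually.of_forall fun _ => S.u_bd _ _)

lemma top_θ (S : IsStripSolution μ κ R cv K T b v u θ v_x u_x θ_x u_xx θ_xx) :
    MemLp (fun p : ℝ × ℝ => θ p.1 p.2) ⊤ (stripMeasure T) := by
  refine memLp_top_of_bound S.meas_θ.aestronglyMeasurable b (Eventually.of_forall fun p => ?_)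
  rw [Real.norm_of_nonneg (S.θ_pos _ _).le]
  exact S.θ_le _ _

lemma top_comp_θ (S : IsStripSolution μ κ R cv K T b v u θ v_x u_x θ_x u_xx θ_xx)
    {w : ℝ → ℝ} (hw : Measurable w) {c : ℝ}
    (hc : ∀ y, 0 < y → y ≤ b → |w y| ≤ c) :
    MemLp (fun p : ℝ × ℝ => w (θ p.1 p.2)) ⊤ (stripMeasure T) :=
  memLp_top_of_bound (hw.comp S.meas_θ).aestronglyMeasurable c
    (Eventually.of_forall fun _ => hc _ (S.θ_pos _ _) (S.θ_le _ _))

lemma two_comp_θ (S : IsStripSolution μ κ R cv K T b v u θ v_x u_x θ_x u_xx θ_xx)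
    {w : ℝ → ℝ} (hw : Measurable w) {c : ℝ}
    (hc : ∀ y, 0 < y → |w y| ≤ c * |y - 1|) :
    MemLp (fun p : ℝ × ℝ => w (θ p.1 p.2)) 2 (stripMeasure T) :=
  S.mθ.of_le_mul (hw.comp S.meas_θ).aestronglyMeasurable
    (Eventually.of_forall fun _ => hc _ (S.θ_pos _ _))

/-- The acceleration lies in `L² + L¹` on the strip, hence may be tested with `L² ∩ L^∞`. -/
lemma integrable_mul_accel (S : IsStripSolution μ κ R cv K T b v u θ v_x u_x θ_x u_xx θ_xx)
    (hK : 0 < K) {f : ℝ → ℝ → ℝ}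
    (h2 : MemLp (fun p : ℝ × ℝ => f p.1 p.2) 2 (stripMeasure T))
    (hi : MemLp (fun p : ℝ × ℝ => f p.1 p.2) ⊤ (stripMeasure T)) :
    Integrable (fun p : ℝ × ℝ => f p.1 p.2 * accelOf μ R (v p.1 p.2) (u_xx p.1 p.2) (u_x p.1 p.2)
      (v_x p.1 p.2) (θ p.1 p.2) (θ_x p.1 p.2)) (stripMeasure T) := by
  have iv := S.top_inv_v hK
  have t1 := (integrable_top_mul iv (integrable_two_two h2 S.mu_xx)).const_mul μ
  have t2 := (integrable_top_mul (memLp_top_mul hi (memLp_top_mul iv iv))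
    (integrable_two_two S.mu_x S.mv_x)).const_mul μ
  have t3 := (integrable_top_mul iv (integrable_two_two h2 S.mθ_x)).const_mul R
  have t4 := (integrable_top_mul (memLp_top_mul S.top_θ (memLp_top_mul iv iv))
    (integrable_two_two h2 S.mv_x)).const_mul R
  refine (((t1.sub t2).sub t3).add t4).congr (Eventually.of_forall fun p => ?_)
  have := (S.v_pos hK p.1 p.2).ne'
  simp only [Pi.sub_apply, Pi.add_apply, accelOf]
  field_simp
  ring

/-- The heating rate lies in `L² + L¹` on the strip, hence may be tested with `L² ∩ L^∞`. -/
lemma integrable_mul_heat (S : IsStripSolution μ κ R cv K T b v u θ v_x u_x θ_x u_xx θ_xx)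
    (hK : 0 < K) {f : ℝ → ℝ → ℝ}
    (h2 : MemLp (fun p : ℝ × ℝ => f p.1 p.2) 2 (stripMeasure T))
    (hi : MemLp (fun p : ℝ × ℝ => f p.1 p.2) ⊤ (stripMeasure T)) :
    Integrable (fun p : ℝ × ℝ => f p.1 p.2 * heatOf μ κ R (v p.1 p.2) (u_x p.1 p.2)
      (v_x p.1 p.2) (θ p.1 p.2) (θ_x p.1 p.2) (θ_xx p.1 p.2)) (stripMeasure T) := by
  have iv := S.top_inv_v hK
  have t1 := (integrable_top_mul iv (integrable_two_two h2 S.mθ_xx)).const_mul κ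
  have t2 := (integrable_top_mul (memLp_top_mul hi (memLp_top_mul iv iv))
    (integrable_two_two S.mθ_x S.mv_x)).const_mul κ
  have t3 := (integrable_top_mul (memLp_top_mul hi iv)
    (integrable_two_two S.mu_x S.mu_x)).const_mul μ
  have t4 := (integrable_top_mul (memLp_top_mul S.top_θ iv)
    (integrable_two_two h2 S.mu_x)).const_mul R
  refine (((t1.sub t2).add t3).sub t4).congr (Eventually.of_forall fun p => ?_)
  have := (S.v_pos hK p.1 p.2).ne'
  simp only [Pi.sub_apply, Pi.add_apply, heatOf]
  field_simp

lemma meas_u_x (S : IsStripSolution μ κ R cv K T b v u θ v_x u_x θ_x u_xx θ_xx) :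
    Measurable fun p : ℝ × ℝ => u_x p.1 p.2 :=
  measurable_of_hasDerivAt S.meas_u S.du_x

lemma meas_θ_x (S : IsStripSolution μ κ R cv K T b v u θ v_x u_x θ_x u_xx θ_xx) :
    Measurable fun p : ℝ × ℝ => θ_x p.1 p.2 :=
  measurable_of_hasDerivAt S.meas_θ S.dθ_x

end IsStripSolution

/-! ### The basic energy estimate -/

/-- The entropy density `θ - 1 - log θ` regularised at `θ = 0`. It keeps the minimum at `θ = 1`,
and its derivative `(θ - 1)/(θ + δ)` is bounded on `θ > 0`, so that no lower bound for
the temperature is needed. -/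
noncomputable def regEntropy (δ y : ℝ) : ℝ :=
  y - 1 - (1 + δ) * (Real.log (y + δ) - Real.log (1 + δ))

lemma regEntropy_eq {δ y : ℝ} (hδ : 0 < δ) (hy : 0 < y) :
    regEntropy δ y = (1 + δ) * ((y + δ) / (1 + δ) - 1 - Real.log ((y + δ) / (1 + δ))) := by
  rw [regEntropy, Real.log_div (by positivity) (by positivity)]
  field_simp
  ring

lemma sub_one_sub_log_le {y : ℝ} (hy : 0 < y) : y - 1 - Real.log y ≤ (y - 1) ^ 2 / y := by
  have := Real.one_sub_inv_le_log_of_pos hy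
  have h : (y - 1) ^ 2 / y = y - 2 + y⁻¹ := by field_simp; ring
  linarith

lemma regEntropy_nonneg {δ y : ℝ} (hδ : 0 < δ) (hy : 0 < y) : 0 ≤ regEntropy δ y := by
  rw [regEntropy_eq hδ hy]
  have : 0 < (y + δ) / (1 + δ) := by positivity
  have := Real.log_le_sub_one_of_pos this
  exact mul_nonneg (by positivity) (by linarith)

lemma regEntropy_le {δ y m : ℝ} (hδ : 0 < δ) (hm : 0 < m) (hy : m ≤ y) :
    regEntropy δ y ≤ (y - 1) ^ 2 / m := by
  have hy0 : 0 < y := lt_of_lt_of_le hm hy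
  rw [regEntropy_eq hδ hy0]
  have h1 : 0 < (y + δ) / (1 + δ) := by positivity
  have h2 := mul_le_mul_of_nonneg_left (sub_one_sub_log_le h1) (by positivity : 0 ≤ 1 + δ)
  refine h2.trans ?_
  have h3 : (1 + δ) * (((y + δ) / (1 + δ) - 1) ^ 2 / ((y + δ) / (1 + δ)))
      = (y - 1) ^ 2 / (y + δ) := by
    field_simp
    ring
  rw [h3]
  exact div_le_div_of_nonneg_left (sq_nonneg _) hm (by linarith)

/-- Uniformly in `δ ≤ 1`, the regularised entropy controls the temperature where it is large; the
bound comes from `y - 1 - log y ≥ (√y - 1)²`. -/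
lemma regEntropy_ge {δ y : ℝ} (hδ : 0 < δ) (hδ1 : δ ≤ 1) (hy : 7 / 4 ≤ y) :
    y / 50 ≤ regEntropy δ y := by
  rw [regEntropy_eq hδ (by linarith)]
  have hz : 11 / 8 ≤ (y + δ) / (1 + δ) := by
    rw [le_div_iff₀ (by positivity)]; linarith
  have hmul : (1 + δ) * ((y + δ) / (1 + δ)) = y + δ := by field_simp
  generalize (y + δ) / (1 + δ) = z at hz hmul
  have hz0 : 0 < z := by linarith
  obtain ⟨r, hr, hrz⟩ : ∃ r : ℝ, 0 < r ∧ r ^ 2 = z := ⟨√z, Real.sqrt_pos.2 hz0, Real.sq_sqrt hz0.le⟩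
  have hr1 : 117 / 100 ≤ r := by
    by_contra hcon
    push Not at hcon
    nlinarith
  have hl : Real.log z ≤ 2 * (r - 1) := by
    rw [← hrz, Real.log_pow]
    have := Real.log_le_sub_one_of_pos hr
    push_cast
    linarith
  have hkey : z / 50 ≤ z - 1 - Real.log z := by
    nlinarith
  nlinarith

namespace IsStripSolution

variable {μ κ R cv K T b : ℝ} {v u θ v_x u_x θ_x u_xx θ_xx : ℝ → ℝ → ℝ}

/-- The basic energy balance with the regularised entropy. Up to the defect
`δ(θ - 1)/(θ + δ)`, the pressure terms cancel. -/
lemma basic_balance (S : IsStripSolution μ κ R cv K T b v u θ v_x u_x θ_x u_xx θ_xx)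
    (hμ : 0 < μ) (hκ : 0 < κ) (hR : 0 < R) (hcv : 0 < cv) (hK : 0 < K) (hT : 0 ≤ T)
    {δ : ℝ} (hδ : 0 < δ)
    (h0 : Integrable fun x => u x 0 ^ 2 / 2 + R * (v x 0 - 1 - Real.log (v x 0))
      + cv * regEntropy δ (θ x 0)) :
    (∫⁻ x, ENNReal.ofReal (u x T ^ 2 / 2 + R * (v x T - 1 - Real.log (v x T))
        + cv * regEntropy δ (θ x T)))
      + ∫⁻ p, ENNReal.ofReal ((1 + δ) / (θ p.1 p.2 + δ) * μ * u_x p.1 p.2 ^ 2 / v p.1 p.2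
        + κ * ((1 + δ) / (θ p.1 p.2 + δ) ^ 2) * θ_x p.1 p.2 ^ 2 / v p.1 p.2) ∂(stripMeasure T)
      ≤ (∫⁻ x, ENNReal.ofReal (u x 0 ^ 2 / 2 + R * (v x 0 - 1 - Real.log (v x 0))
        + cv * regEntropy δ (θ x 0)))
      + ∫⁻ p, ENNReal.ofReal (R * |u_x p.1 p.2| / v p.1 p.2 *
          (δ * |θ p.1 p.2 - 1| / (θ p.1 p.2 + δ))) ∂(stripMeasure T) := by
  have hv := fun x t => S.v_pos hK x t
  have hθ := S.θ_pos
  have mv := S.meas_v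
  have mu := S.meas_u
  have mθ := S.meas_θ
  have mux := S.meas_u_x
  have mθx := S.meas_θ_x
  have iv := S.top_inv_v hK
  have hw : Measurable fun y : ℝ => (y - 1) / (y + δ) := by fun_prop
  have f2 := S.two_comp_θ (w := fun y => (y - 1) / (y + δ)) (c := δ⁻¹) hw (fun y hy => by
    rw [abs_div, abs_of_pos (by positivity : 0 < y + δ), div_eq_inv_mul]
    refine mul_le_mul_of_nonneg_right ?_ (abs_nonneg _)
    exact inv_anti₀ hδ (by linarith))
  have ft := S.top_comp_θ (w := fun y => (y - 1) / (y + δ)) (c := 1 + δ⁻¹) hw (fun y hy _ => by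
    have h1 : (y - 1) / (y + δ) ≤ 1 := by
      rw [div_le_one (by positivity)]; linarith
    have h2 : -δ⁻¹ ≤ (y - 1) / (y + δ) := by
      rw [le_div_iff₀ (by positivity)]
      have : δ⁻¹ * δ = 1 := inv_mul_cancel₀ hδ.ne'
      have : 0 < δ⁻¹ * y := by positivity
      nlinarith
    have : 0 < δ⁻¹ := by positivity
    rw [abs_le]; constructor <;> linarith)
  have gt := S.top_comp_θ (w := fun y => (y + δ)⁻¹) (c := δ⁻¹) (by fun_prop) (fun y hy _ => by
    rw [abs_of_pos (by positivity)]
    exact inv_anti₀ hδ (by linarith))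
  refine balance_inequality hT
    (Φ := fun x t => u x t ^ 2 / 2 + R * (v x t - 1 - Real.log (v x t))
      + cv * regEntropy δ (θ x t))
    (Ψ := fun x t => u x t * accelOf μ R (v x t) (u_xx x t) (u_x x t) (v_x x t) (θ x t) (θ_x x t)
      + R * ((v x t - 1) / v x t * u_x x t) + (θ x t - 1) / (θ x t + δ) *
        heatOf μ κ R (v x t) (u_x x t) (v_x x t) (θ x t) (θ_x x t) (θ_xx x t))
    (A := fun x t => R * u_x x t / v x t * (δ * (θ x t - 1) / (θ x t + δ))
      - ((1 + δ) / (θ x t + δ) * μ * u_x x t ^ 2 / v x t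
        + κ * ((1 + δ) / (θ x t + δ) ^ 2) * θ_x x t ^ 2 / v x t))
    (B := fun x t => u x t * (μ * (u_x x t / v x t) - R * (θ x t / v x t - 1))
      + κ * ((θ x t - 1) / (θ x t + δ) * (θ_x x t / v x t)))
    (Bx := fun x t => u_x x t * (μ * (u_x x t / v x t) - R * (θ x t / v x t - 1))
      + u x t * accelOf μ R (v x t) (u_xx x t) (u_x x t) (v_x x t) (θ x t) (θ_x x t)
      + κ * ((1 + δ) / (θ x t + δ) ^ 2 * θ_x x t * (θ_x x t / v x t)
        + (θ x t - 1) / (θ x t + δ) * (θ_xx x t / v x t - θ_x x t * v_x x t / v x t ^ 2)))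
    (N := fun x t => R * |u_x x t| / v x t * (δ * |θ x t - 1| / (θ x t + δ)))
    (P := fun x t => (1 + δ) / (θ x t + δ) * μ * u_x x t ^ 2 / v x t
        + κ * ((1 + δ) / (θ x t + δ) ^ 2) * θ_x x t ^ 2 / v x t)
    ?_ ?_ ?_ ?_ ?_ ?_ ?_ h0 ?_ ?_ ?_ ?_ ?_ ?_
  · intro x
    have h1 := S.cont_u x
    have h2 := S.cont_v x
    have h3 := S.cont_θ x
    have h4 : Continuous fun t => Real.log (v x t) := h2.log fun t => (hv x t).ne'
    have h5 : Continuous fun t => Real.log (θ x t + δ) :=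
      (h3.add continuous_const).log fun t => (add_pos (hθ x t) hδ).ne'
    unfold regEntropy
    fun_prop
  · intro x t ht
    have h1 := ((S.du_t x t ht).fun_pow 2).div_const 2
    have h2 := (((S.dv_t x t ht).sub_const 1).fun_sub
      ((S.dv_t x t ht).log (hv x t).ne')).const_mul R
    have hp : θ x t + δ ≠ 0 := by have := hθ x t; positivity
    have h3 := (((S.dθ_t x t ht).sub_const 1).fun_sub
      (((((S.dθ_t x t ht).add_const δ).log hp).sub_const
        (Real.log (1 + δ))).const_mul (1 + δ))).const_mul cv
    refine ((h1.fun_add h2).fun_add h3).congr_deriv ?_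
    have := (hv x t).ne'
    generalize accelOf μ R (v x t) (u_xx x t) (u_x x t) (v_x x t) (θ x t) (θ_x x t) = U
    generalize heatOf μ κ R (v x t) (u_x x t) (v_x x t) (θ x t) (θ_x x t) (θ_xx x t) = E
    simp
    field_simp
    ring
  · intro x t
    have hp : θ x t + δ ≠ 0 := by have := hθ x t; positivity
    have hv' := (hv x t).ne'
    have h1 := ((S.du_xx x t).fun_div (S.dv_x x t) hv').const_mul μ
    have h2 := (((S.dθ_x x t).fun_div (S.dv_x x t) hv').sub_const 1).const_mul R
    have h3 := ((S.dθ_x x t).sub_const 1).fun_div ((S.dθ_x x t).add_const δ) hp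
    have h4 := (S.dθ_xx x t).fun_div (S.dv_x x t) hv'
    refine (((S.du_x x t).fun_mul (h1.fun_sub h2)).fun_add
      ((h3.fun_mul h4).const_mul κ)).congr_deriv ?_
    simp only [accelOf]
    field_simp
    ring
  · have t1 := S.integrable_mul_accel hK S.mu S.top_u
    have t2 := (integrable_top_mul iv (integrable_two_two S.mv S.mu_x)).const_mul R
    have t3 := S.integrable_mul_heat hK (f := fun x t => (θ x t - 1) / (θ x t + δ)) f2 ft
    refine ((t1.add t2).add t3).congr (Eventually.of_forall fun p => ?_)
    simp only [Pi.add_apply]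
    ring
  · have t1 := (integrable_top_mul iv (integrable_two_two f2 S.mu_x)).const_mul (R * δ)
    have t2 := (integrable_top_mul (memLp_top_mul iv gt)
      (integrable_two_two S.mu_x S.mu_x)).const_mul ((1 + δ) * μ)
    have t3 := (integrable_top_mul (memLp_top_mul iv (memLp_top_mul gt gt))
      (integrable_two_two S.mθ_x S.mθ_x)).const_mul (κ * (1 + δ))
    refine (t1.sub (t2.add t3)).congr (Eventually.of_forall fun p => ?_)
    simp only [Pi.add_apply, Pi.sub_apply]
    have hp : θ p.1 p.2 + δ ≠ 0 := by have := hθ p.1 p.2; positivity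
    have hv' := (hv p.1 p.2).ne'
    field_simp
  · have t1 := (integrable_top_mul iv (integrable_two_two S.mu S.mu_x)).const_mul μ
    have t2 := (integrable_top_mul iv (integrable_two_two S.mu S.mθ)).const_mul R
    have t3 := (integrable_top_mul iv (integrable_two_two S.mu S.mv)).const_mul R
    have t4 := (integrable_top_mul iv (integrable_two_two f2 S.mθ_x)).const_mul κ
    refine (((t1.sub t2).add t3).add t4).congr (Eventually.of_forall fun p => ?_)
    simp only [Pi.add_apply, Pi.sub_apply]
    have hp : θ p.1 p.2 + δ ≠ 0 := by have := hθ p.1 p.2; positivity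
    have hv' := (hv p.1 p.2).ne'
    field_simp
    ring
  · intro x t
    have hp : θ x t + δ ≠ 0 := by have := hθ x t; positivity
    have hv' := (hv x t).ne'
    simp only [heatOf]
    field_simp
    ring
  · intro x t
    have h1 := Real.log_le_sub_one_of_pos (hv x t)
    have h2 := mul_nonneg hR.le (sub_nonneg.2 h1)
    have h3 := mul_nonneg hcv.le (regEntropy_nonneg hδ (hθ x t))
    have := sq_nonneg (u x t)
    linarith
  · intro x t
    have := hv x t
    have := hθ x t
    positivity
  · intro x t
    have := hv x t
    have := hθ x t
    positivity
  · have : Measurable fun p : ℝ × ℝ => |u_x p.1 p.2| := mux.abs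
    have : Measurable fun p : ℝ × ℝ => |θ p.1 p.2 - 1| := (mθ.sub_const 1).abs
    fun_prop
  · fun_prop
  · intro x t
    refine sub_le_sub_right ?_ _
    have := hv x t
    have := hθ x t
    calc R * u_x x t / v x t * (δ * (θ x t - 1) / (θ x t + δ))
        ≤ |R * u_x x t / v x t * (δ * (θ x t - 1) / (θ x t + δ))| := le_abs_self _
      _ = _ := by
        rw [abs_mul, abs_div, abs_div, abs_mul, abs_mul, abs_of_pos hR, abs_of_pos hδ,
          abs_of_pos (hv x t), abs_of_pos (by positivity : 0 < θ x t + δ)]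

end IsStripSolution

/-- The temperature restricted to the region `θ ≥ 7/4`. -/
noncomputable def largePart (y : ℝ) : ℝ := if 7 / 4 ≤ y then y else 0

lemma largePart_nonneg (y : ℝ) : 0 ≤ largePart y := by
  unfold largePart
  split_ifs <;> linarith

lemma measurable_largePart : Measurable largePart :=
  Measurable.ite measurableSet_Ici measurable_id measurable_const

lemma lintegral_ofReal_const_mul {α : Type*} [MeasurableSpace α] (ν : Measure α) {c : ℝ}
    (hc : 0 ≤ c) (f : α → ℝ) :
    ∫⁻ p, ENNReal.ofReal (c * f p) ∂ν = ENNReal.ofReal c * ∫⁻ p, ENNReal.ofReal (f p) ∂ν := by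
  simp_rw [ENNReal.ofReal_mul hc]
  exact lintegral_const_mul' _ _ ENNReal.ofReal_ne_top

namespace IsStripSolution

variable {μ κ R cv K T b : ℝ} {v u θ v_x u_x θ_x u_xx θ_xx : ℝ → ℝ → ℝ}

lemma measurable_slice {f f' : ℝ → ℝ → ℝ} (h : ∀ x t, HasDerivAt (fun y => f y t) (f' x t) x)
    (t : ℝ) : Measurable fun x => f x t :=
  (continuous_iff_continuousAt.2 fun x => (h x t).continuousAt).measurable

/-- The basic energy estimate, obtained from `basic_balance` in the limit `δ → 0`. Only the part of
the dissipation with `θ ≤ 2` is recorded. -/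
lemma basic_estimate (S : IsStripSolution μ κ R cv K T b v u θ v_x u_x θ_x u_xx θ_xx)
    (hμ : 0 < μ) (hκ : 0 < κ) (hR : 0 < R) (hcv : 0 < cv) (hK : 0 < K) (hT : 0 ≤ T)
    {M m : ℝ} (hm : 0 < m) (hθ0 : ∀ x, m ≤ θ x 0)
    (iv : ∫⁻ x, ENNReal.ofReal ((v x 0 - 1) ^ 2) ≤ ENNReal.ofReal (M ^ 2))
    (iu : ∫⁻ x, ENNReal.ofReal (u x 0 ^ 2) ≤ ENNReal.ofReal (M ^ 2))
    (iθ : ∫⁻ x, ENNReal.ofReal ((θ x 0 - 1) ^ 2) ≤ ENNReal.ofReal (M ^ 2)) :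
    (∫⁻ x, ENNReal.ofReal (u x T ^ 2 / 2 + cv / 50 * largePart (θ x T)))
      + ∫⁻ p, ENNReal.ofReal (min μ κ / (9 * K) *
          (if θ p.1 p.2 ≤ 2 then u_x p.1 p.2 ^ 2 + θ_x p.1 p.2 ^ 2 else 0)) ∂(stripMeasure T)
      ≤ ENNReal.ofReal (2⁻¹ * M ^ 2 + R * K * M ^ 2 + cv / m * M ^ 2) := by
  have hv := fun x t => S.v_pos hK x t
  have hθ := S.θ_pos
  have mu0 := measurable_slice S.du_x 0
  have mv0 := measurable_slice S.dv_x 0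
  have mθ0 := measurable_slice S.dθ_x 0
  have hq : ∀ δ, 0 < δ → ∀ x, u x 0 ^ 2 / 2 + R * (v x 0 - 1 - Real.log (v x 0))
      + cv * regEntropy δ (θ x 0)
      ≤ 2⁻¹ * u x 0 ^ 2 + R * K * (v x 0 - 1) ^ 2 + cv / m * (θ x 0 - 1) ^ 2 := by
    intro δ hδ x
    have h1 := mul_le_mul_of_nonneg_left (regEntropy_le hδ hm (hθ0 x)) hcv.le
    have h2 : v x 0 - 1 - Real.log (v x 0) ≤ K * (v x 0 - 1) ^ 2 := by
      refine (sub_one_sub_log_le (hv x 0)).trans ?_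
      rw [div_eq_inv_mul]
      exact mul_le_mul_of_nonneg_right (S.inv_v_le hK x 0) (sq_nonneg _)
    have h3 := mul_le_mul_of_nonneg_left h2 hR.le
    have h4 : cv * ((θ x 0 - 1) ^ 2 / m) = cv / m * (θ x 0 - 1) ^ 2 := by ring
    rw [h4] at h1
    nlinarith
  have hnn : ∀ δ, 0 < δ → ∀ x, 0 ≤ u x 0 ^ 2 / 2 + R * (v x 0 - 1 - Real.log (v x 0))
      + cv * regEntropy δ (θ x 0) := by
    intro δ hδ x
    have h1 := Real.log_le_sub_one_of_pos (hv x 0)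
    have h2 := mul_nonneg hR.le (sub_nonneg.2 h1)
    have h3 := mul_nonneg hcv.le (regEntropy_nonneg hδ (hθ x 0))
    have := sq_nonneg (u x 0)
    linarith
  have hlq : ∫⁻ x, ENNReal.ofReal
      (2⁻¹ * u x 0 ^ 2 + R * K * (v x 0 - 1) ^ 2 + cv / m * (θ x 0 - 1) ^ 2)
      ≤ ENNReal.ofReal (2⁻¹ * M ^ 2 + R * K * M ^ 2 + cv / m * M ^ 2) := by
    rw [ENNReal.ofReal_add (by positivity) (by positivity),
      ENNReal.ofReal_add (by positivity) (by positivity)]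
    have : ∀ x, ENNReal.ofReal
        (2⁻¹ * u x 0 ^ 2 + R * K * (v x 0 - 1) ^ 2 + cv / m * (θ x 0 - 1) ^ 2)
        = ENNReal.ofReal (2⁻¹ * u x 0 ^ 2) + ENNReal.ofReal (R * K * (v x 0 - 1) ^ 2)
          + ENNReal.ofReal (cv / m * (θ x 0 - 1) ^ 2) := fun x => by
      rw [ENNReal.ofReal_add (by positivity) (by positivity),
        ENNReal.ofReal_add (by positivity) (by positivity)]
    simp_rw [this]
    rw [lintegral_add_left (by fun_prop), lintegral_add_left (by fun_prop),
      lintegral_ofReal_const_mul _ (by positivity), lintegral_ofReal_const_mul _ (by positivity),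
      lintegral_ofReal_const_mul _ (by positivity), ENNReal.ofReal_mul (p := 2⁻¹) (by positivity),
      ENNReal.ofReal_mul (p := R * K) (by positivity),
      ENNReal.ofReal_mul (p := cv / m) (by positivity)]
    gcongr
  have h0 : ∀ δ, 0 < δ → Integrable fun x => u x 0 ^ 2 / 2 + R * (v x 0 - 1 - Real.log (v x 0))
      + cv * regEntropy δ (θ x 0) := by
    intro δ hδ
    refine (lintegral_ofReal_ne_top_iff_integrable ?_
      (Eventually.of_forall fun x => hnn δ hδ x)).1 ?_
    · unfold regEntropy
      have : Measurable fun x => Real.log (v x 0) := mv0.log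
      have : Measurable fun x => Real.log (θ x 0 + δ) := (mθ0.add_const δ).log
      exact Measurable.aestronglyMeasurable (by fun_prop)
    · refine ne_top_of_le_ne_top ENNReal.ofReal_ne_top ((lintegral_mono fun x => ?_).trans hlq)
      exact ENNReal.ofReal_le_ofReal (hq δ hδ x)
  have hδn : ∀ n : ℕ, (0 : ℝ) < 1 / ((n : ℝ) + 1) := fun n => by positivity
  have hδ1 : ∀ n : ℕ, (1 : ℝ) / ((n : ℝ) + 1) ≤ 1 := fun n => by
    rw [div_le_one (by positivity)]
    have : (0 : ℝ) ≤ n := n.cast_nonneg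
    linarith
  -- the defect of the regularised balance tends to zero by dominated convergence
  have hlim : Tendsto (fun n : ℕ => ∫⁻ p, ENNReal.ofReal (R * |u_x p.1 p.2| / v p.1 p.2 *
      ((1 / ((n : ℝ) + 1)) * |θ p.1 p.2 - 1| / (θ p.1 p.2 + 1 / ((n : ℝ) + 1))))
        ∂(stripMeasure T)) atTop (nhds 0) := by
    have hz : (0 : ENNReal) = ∫⁻ _ : ℝ × ℝ, 0 ∂(stripMeasure T) := by simp
    rw [hz]
    have mv := S.meas_v
    have mθ := S.meas_θ
    have m1 : Measurable fun p : ℝ × ℝ => |u_x p.1 p.2| := S.meas_u_x.abs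
    have m2 : Measurable fun p : ℝ × ℝ => |θ p.1 p.2 - 1| := (S.meas_θ.sub_const 1).abs
    refine tendsto_lintegral_of_dominated_convergence
      (fun p => ENNReal.ofReal (R * K * |u_x p.1 p.2 * (θ p.1 p.2 - 1)|)) (fun n => ?_)
      (fun n => Eventually.of_forall fun p => ?_) ?_ (Eventually.of_forall fun p => ?_)
    · fun_prop
    · refine ENNReal.ofReal_le_ofReal ?_
      have h1 := hv p.1 p.2
      have h2 := hθ p.1 p.2
      have h3 := hδn n
      generalize (1 : ℝ) / ((n : ℝ) + 1) = d at h3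
      have e1 : R * |u_x p.1 p.2| / v p.1 p.2 ≤ R * K * |u_x p.1 p.2| := by
        rw [div_eq_mul_inv]
        have := mul_le_mul_of_nonneg_left (S.inv_v_le hK p.1 p.2)
          (by positivity : 0 ≤ R * |u_x p.1 p.2|)
        linarith
      have e2 : d * |θ p.1 p.2 - 1| / (θ p.1 p.2 + d) ≤ |θ p.1 p.2 - 1| := by
        rw [div_le_iff₀ (by positivity)]
        nlinarith [mul_nonneg (abs_nonneg (θ p.1 p.2 - 1)) h2.le]
      rw [abs_mul, ← mul_assoc]
      exact mul_le_mul e1 e2 (by positivity) (by positivity)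
    · refine ((lintegral_ofReal_ne_top_iff_integrable ?_ ?_).2
        (((integrable_two_two S.mu_x S.mθ).abs).const_mul (R * K)))
      · exact (((integrable_two_two S.mu_x S.mθ).abs).const_mul (R * K)).aestronglyMeasurable
      · exact Eventually.of_forall fun p => by
          simp only [Pi.zero_apply]; positivity
    · have h1 := hv p.1 p.2
      have h2 := hθ p.1 p.2
      rw [← ENNReal.ofReal_zero]
      refine (ENNReal.continuous_ofReal.tendsto 0).comp ?_
      have t0 := tendsto_one_div_add_atTop_nhds_zero_nat (𝕜 := ℝ)
      have t1 := ((t0.mul_const |θ p.1 p.2 - 1|).div (t0.const_add (θ p.1 p.2))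
        (by simpa using h2.ne')).const_mul (R * |u_x p.1 p.2| / v p.1 p.2)
      simpa using t1
  have hmain : ∀ n : ℕ, (∫⁻ x, ENNReal.ofReal (u x T ^ 2 / 2 + cv / 50 * largePart (θ x T)))
      + ∫⁻ p, ENNReal.ofReal (min μ κ / (9 * K) *
          (if θ p.1 p.2 ≤ 2 then u_x p.1 p.2 ^ 2 + θ_x p.1 p.2 ^ 2 else 0)) ∂(stripMeasure T)
      ≤ ENNReal.ofReal (2⁻¹ * M ^ 2 + R * K * M ^ 2 + cv / m * M ^ 2)
        + ∫⁻ p, ENNReal.ofReal (R * |u_x p.1 p.2| / v p.1 p.2 *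
      ((1 / ((n : ℝ) + 1)) * |θ p.1 p.2 - 1| / (θ p.1 p.2 + 1 / ((n : ℝ) + 1))))
        ∂(stripMeasure T) := by
    intro n
    have hd := hδn n
    have hd1 := hδ1 n
    generalize (1 : ℝ) / ((n : ℝ) + 1) = d at hd hd1
    have hb := S.basic_balance hμ hκ hR hcv hK hT hd (h0 d hd)
    refine le_trans (add_le_add ?_ ?_) (hb.trans (add_le_add ?_ le_rfl))
    · refine lintegral_mono fun x => ENNReal.ofReal_le_ofReal ?_
      have h1 := Real.log_le_sub_one_of_pos (hv x T)
      have h2 := mul_nonneg hR.le (sub_nonneg.2 h1)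
      have h3 : cv / 50 * largePart (θ x T) ≤ cv * regEntropy d (θ x T) := by
        unfold largePart
        split_ifs with h
        · have := mul_le_mul_of_nonneg_left (regEntropy_ge hd hd1 h) hcv.le
          linarith
        · have := mul_nonneg hcv.le (regEntropy_nonneg hd (hθ x T))
          linarith
      linarith
    · refine lintegral_mono fun p => ENNReal.ofReal_le_ofReal ?_
      have h1 := hv p.1 p.2
      have h2 := hθ p.1 p.2
      split_ifs with h
      · have e1 : 1 / 9 ≤ (1 + d) / (θ p.1 p.2 + d) := by
          rw [div_le_div_iff₀ (by positivity) (by positivity)]; linarith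
        have e2 : 1 / 9 ≤ (1 + d) / (θ p.1 p.2 + d) ^ 2 := by
          rw [div_le_div_iff₀ (by positivity) (by positivity)]; nlinarith
        have e3 : min μ κ / 9 ≤ (1 + d) / (θ p.1 p.2 + d) * μ := by
          have := min_le_left μ κ
          nlinarith
        have e4 : min μ κ / 9 ≤ κ * ((1 + d) / (θ p.1 p.2 + d) ^ 2) := by
          have := min_le_right μ κ
          nlinarith
        have hmin : 0 < min μ κ := lt_min hμ hκ
        calc min μ κ / (9 * K) * (u_x p.1 p.2 ^ 2 + θ_x p.1 p.2 ^ 2)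
            = (min μ κ / 9 * u_x p.1 p.2 ^ 2 + min μ κ / 9 * θ_x p.1 p.2 ^ 2) * K⁻¹ := by
              field_simp
          _ ≤ ((1 + d) / (θ p.1 p.2 + d) * μ * u_x p.1 p.2 ^ 2
              + κ * ((1 + d) / (θ p.1 p.2 + d) ^ 2) * θ_x p.1 p.2 ^ 2) * (v p.1 p.2)⁻¹ := by
              have := S.le_inv_v hK p.1 p.2
              gcongr
          _ = _ := by ring
      · rw [mul_zero]
        positivity
    · exact (lintegral_mono fun x => ENNReal.ofReal_le_ofReal (hq d hd x)).trans hlq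
  have := hlim.const_add (ENNReal.ofReal (2⁻¹ * M ^ 2 + R * K * M ^ 2 + cv / m * M ^ 2))
  rw [add_zero] at this
  exact ge_of_tendsto' this hmain

end IsStripSolution

/-! ### The truncated temperature balance -/

lemma young {k : ℝ} (hk : 0 < k) (x y : ℝ) : x * y ≤ k / 8 * x ^ 2 + 2 / k * y ^ 2 := by
  have h : k / 8 * x ^ 2 + 2 / k * y ^ 2 - x * y = (k * x - 4 * y) ^ 2 / (8 * k) := by
    field_simp
    ring
  have : 0 ≤ (k * x - 4 * y) ^ 2 / (8 * k) := by positivity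
  linarith

/-- The source of the truncated balance, pointwise: all indefinite terms are absorbed by Young's
inequality. Here `G, G₁, G₂, J, J₁` are the values of `g, g₁, g₂, h, h₁` at the temperature. -/
lemma truncated_source_le {μ κ R cv : ℝ} (hμ : 0 < μ) (hκ : 0 < κ) (hR : 0 < R) (hcv : 0 < cv)
    {G G₁ G₂ J J₁ θ u u_x θ_x : ℝ} (hG₁ : 0 ≤ G₁) (hG₂ : 0 ≤ G₂)
    (hJ : 0 ≤ J) (hJG : J ≤ G) (hJ₁ : G₁ ≤ 2 * J₁) :
    J * (μ * u_x ^ 2 - R * θ * u_x) - κ * J₁ * θ_x ^ 2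
      - 2 * (u_x * G + u * G₁ * θ_x) * (μ * u_x - R * θ)
      + u ^ 2 * G₁ * (μ * u_x ^ 2 - R * θ * u_x) / cv
      - κ / cv * (2 * u * u_x * G₁ + u ^ 2 * G₂ * θ_x) * θ_x
    ≤ (2 * R ^ 2 / μ * (G * θ ^ 2) + (8 * R ^ 2 / κ + R / (2 * cv)) * (G₁ * (u ^ 2 * θ ^ 2))
        + (8 * μ ^ 2 / κ + 8 * κ / cv ^ 2 + μ / cv + R / (2 * cv)) * (G₁ * (u ^ 2 * u_x ^ 2)))
      - (μ / 2 * G * u_x ^ 2 + κ / 8 * G₁ * θ_x ^ 2) := by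
  have hG : 0 ≤ G := hJ.trans hJG
  have e1 : J * (μ * u_x ^ 2) ≤ G * (μ * u_x ^ 2) :=
    mul_le_mul_of_nonneg_right hJG (by positivity)
  have e2 : (2 * G - J) * (R * θ * u_x) ≤ G * (μ / 2 * u_x ^ 2 + 2 * R ^ 2 / μ * θ ^ 2) := by
    have y := young (by positivity : 0 < 4 * μ) u_x (2 * R * |θ|)
    have y' := young (by positivity : 0 < 4 * μ) (-u_x) (2 * R * |θ|)
    have hs : 2 / (4 * μ) * (2 * R * |θ|) ^ 2 = 2 * R ^ 2 / μ * θ ^ 2 := by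
      rw [mul_pow, sq_abs]
      field_simp
      ring
    rw [hs] at y y'
    have hab : R * θ * u_x ≤ (μ / 2 * u_x ^ 2 + 2 * R ^ 2 / μ * θ ^ 2) / 2 := by
      rcases abs_choice θ with h | h <;> rw [h] at y y' <;> nlinarith
    have hnn : 0 ≤ (μ / 2 * u_x ^ 2 + 2 * R ^ 2 / μ * θ ^ 2) / 2 := by positivity
    calc (2 * G - J) * (R * θ * u_x)
        ≤ (2 * G - J) * ((μ / 2 * u_x ^ 2 + 2 * R ^ 2 / μ * θ ^ 2) / 2) :=
          mul_le_mul_of_nonneg_left hab (by linarith)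
      _ ≤ (2 * G) * ((μ / 2 * u_x ^ 2 + 2 * R ^ 2 / μ * θ ^ 2) / 2) :=
          mul_le_mul_of_nonneg_right (by linarith) hnn
      _ = _ := by ring
  have e3 := mul_le_mul_of_nonneg_left (young hκ θ_x (2 * R * θ * u)) hG₁
  have e4 := mul_le_mul_of_nonneg_left (young hκ θ_x (-(2 * μ * u * u_x))) hG₁
  have e5 := mul_le_mul_of_nonneg_left (young hκ θ_x (-(2 * κ / cv * u * u_x))) hG₁
  have e6 : -(R / cv) * (G₁ * u ^ 2 * (θ * u_x))
      ≤ R / (2 * cv) * (G₁ * u ^ 2 * (θ ^ 2 + u_x ^ 2)) := by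
    have : R / (2 * cv) * (G₁ * u ^ 2 * (θ ^ 2 + u_x ^ 2)) - -(R / cv) * (G₁ * u ^ 2 * (θ * u_x))
        = R / (2 * cv) * (G₁ * u ^ 2 * (θ + u_x) ^ 2) := by
      field_simp
      ring
    have h2 : 0 ≤ R / (2 * cv) * (G₁ * u ^ 2 * (θ + u_x) ^ 2) := by positivity
    linarith
  have e7 : κ / 2 * (G₁ * θ_x ^ 2) ≤ κ * J₁ * θ_x ^ 2 := by
    have := mul_le_mul_of_nonneg_right hJ₁ (by positivity : 0 ≤ κ / 2 * θ_x ^ 2)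
    linarith
  have e8 : 0 ≤ κ / cv * (u ^ 2 * G₂ * θ_x ^ 2) := by positivity
  have i3 : 2 / κ * (2 * R * θ * u) ^ 2 = 8 * R ^ 2 / κ * (u ^ 2 * θ ^ 2) := by ring
  have i4 : 2 / κ * (-(2 * μ * u * u_x)) ^ 2 = 8 * μ ^ 2 / κ * (u ^ 2 * u_x ^ 2) := by ring
  have i5 : 2 / κ * (-(2 * κ / cv * u * u_x)) ^ 2 = 8 * κ / cv ^ 2 * (u ^ 2 * u_x ^ 2) := by
    field_simp
    ring
  rw [i3] at e3
  rw [i4] at e4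
  rw [i5] at e5
  ring_nf at e1 e2 e3 e4 e5 e6 e7 e8 ⊢
  linarith

lemma IsTruncation.continuous {f f' : ℝ → ℝ} (h : ∀ y, HasDerivAt f (f' y) y) : Continuous f :=
  continuous_iff_continuousAt.2 fun y => (h y).continuousAt

namespace IsStripSolution

variable {μ κ R cv K T b : ℝ} {v u θ v_x u_x θ_x u_xx θ_xx : ℝ → ℝ → ℝ}

/-- The balance of `c_v H(θ) + u² g(θ)`. The term `u² g(θ)` provides the dissipation `g u_x²` which
outweighs the viscous heating `h u_x²`. -/
lemma truncated_balance (S : IsStripSolution μ κ R cv K T b v u θ v_x u_x θ_x u_xx θ_xx)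
    (hμ : 0 < μ) (hκ : 0 < κ) (hR : 0 < R) (hcv : 0 < cv) (hK : 0 < K) (hT : 0 ≤ T)
    {g g₁ g₂ H h h₁ : ℝ → ℝ} (G : IsTruncation g g₁ g₂ H h h₁)
    (h0 : Integrable fun x => cv * H (θ x 0) + u x 0 ^ 2 * g (θ x 0)) :
    (∫⁻ x, ENNReal.ofReal (cv * H (θ x T) + u x T ^ 2 * g (θ x T)))
      + ∫⁻ p, ENNReal.ofReal ((v p.1 p.2)⁻¹ * (μ / 2 * g (θ p.1 p.2) * u_x p.1 p.2 ^ 2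
          + κ / 8 * g₁ (θ p.1 p.2) * θ_x p.1 p.2 ^ 2)) ∂(stripMeasure T)
      ≤ (∫⁻ x, ENNReal.ofReal (cv * H (θ x 0) + u x 0 ^ 2 * g (θ x 0)))
      + ∫⁻ p, ENNReal.ofReal ((v p.1 p.2)⁻¹ *
          (2 * R ^ 2 / μ * (g (θ p.1 p.2) * θ p.1 p.2 ^ 2)
          + (8 * R ^ 2 / κ + R / (2 * cv)) * (g₁ (θ p.1 p.2) * (u p.1 p.2 ^ 2 * θ p.1 p.2 ^ 2))
          + (8 * μ ^ 2 / κ + 8 * κ / cv ^ 2 + μ / cv + R / (2 * cv))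
            * (g₁ (θ p.1 p.2) * (u p.1 p.2 ^ 2 * u_x p.1 p.2 ^ 2)))) ∂(stripMeasure T) := by
  have hv := fun x t => S.v_pos hK x t
  have hθ := S.θ_pos
  have mv := S.meas_v
  have mu := S.meas_u
  have mθ := S.meas_θ
  have mux := S.meas_u_x
  have mθx := S.meas_θ_x
  have iv := S.top_inv_v hK
  have cg := IsTruncation.continuous G.dg
  have cg₁ := IsTruncation.continuous G.dg₁
  have ch := IsTruncation.continuous G.dh
  have cH := IsTruncation.continuous G.dH
  have mg : Measurable fun p : ℝ × ℝ => g (θ p.1 p.2) := cg.measurable.comp mθ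
  have mg₁ : Measurable fun p : ℝ × ℝ => g₁ (θ p.1 p.2) := cg₁.measurable.comp mθ
  have hmax : ∀ y : ℝ, max (y - 7 / 4) 0 ≤ |y - 1| := fun y =>
    max_le (by linarith [le_abs_self (y - 1)]) (abs_nonneg _)
  have hmax' : ∀ y : ℝ, 0 < y → y ≤ b → max (y - 7 / 4) 0 ≤ b := fun y h1 h2 =>
    max_le (by linarith) (by linarith)
  have gtwo := S.two_comp_θ (w := g) (c := 1) cg.measurable (fun y _ => by
    rw [abs_of_nonneg (G.g_nonneg y), one_mul]
    exact (G.g_le y).trans (hmax y))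
  have htwo := S.two_comp_θ (w := h) (c := 1) ch.measurable (fun y _ => by
    rw [abs_of_nonneg (G.h_nonneg y), one_mul]
    exact ((G.h_le y).trans (G.g_le y)).trans (hmax y))
  have gtop := S.top_comp_θ (w := g) (c := b) cg.measurable (fun y h1 h2 => by
    rw [abs_of_nonneg (G.g_nonneg y)]
    exact (G.g_le y).trans (hmax' y h1 h2))
  have htop := S.top_comp_θ (w := h) (c := b) ch.measurable (fun y h1 h2 => by
    rw [abs_of_nonneg (G.h_nonneg y)]
    exact ((G.h_le y).trans (G.g_le y)).trans (hmax' y h1 h2))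
  have g₁top := S.top_comp_θ (w := g₁) (c := 1) cg₁.measurable (fun y _ _ => by
    rw [abs_of_nonneg (G.g₁_nonneg y)]
    exact G.g₁_le y)
  have g₂top := S.top_comp_θ (w := g₂) (c := 6) G.cg₂.measurable (fun y _ _ => by
    rw [abs_of_nonneg (G.g₂_nonneg y)]
    exact G.g₂_le y)
  have h₁top := S.top_comp_θ (w := h₁) (c := 3) G.ch₁.measurable (fun y _ _ => by
    have := G.h₁_ge y
    have := G.g₁_nonneg y
    rw [abs_of_nonneg (by linarith)]
    exact G.h₁_le y)
  have utop := S.top_u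
  have θtop := S.top_θ
  have ugtwo := (memLp_top_mul_two gtop S.mu).const_mul 2
  have ugtop := (memLp_top_mul gtop S.top_u).const_mul 2
  have uugtwo := (memLp_top_mul_two (memLp_top_mul utop g₁top) S.mu).const_mul cv⁻¹
  have uugtop := (memLp_top_mul (memLp_top_mul utop g₁top) utop).const_mul cv⁻¹
  refine balance_inequality hT
    (Φ := fun x t => cv * H (θ x t) + u x t ^ 2 * g (θ x t))
    (Ψ := fun x t => h (θ x t) *
        heatOf μ κ R (v x t) (u_x x t) (v_x x t) (θ x t) (θ_x x t) (θ_xx x t)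
      + 2 * (g (θ x t) * u x t) *
        accelOf μ R (v x t) (u_xx x t) (u_x x t) (v_x x t) (θ x t) (θ_x x t)
      + cv⁻¹ * (u x t * g₁ (θ x t) * u x t) *
        heatOf μ κ R (v x t) (u_x x t) (v_x x t) (θ x t) (θ_x x t) (θ_xx x t))
    (A := fun x t => (v x t)⁻¹ * (h (θ x t) * (μ * u_x x t ^ 2 - R * θ x t * u_x x t)
      - κ * h₁ (θ x t) * θ_x x t ^ 2
      - 2 * (u_x x t * g (θ x t) + u x t * g₁ (θ x t) * θ_x x t) * (μ * u_x x t - R * θ x t)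
      + u x t ^ 2 * g₁ (θ x t) * (μ * u_x x t ^ 2 - R * θ x t * u_x x t) / cv
      - κ / cv * (2 * u x t * u_x x t * g₁ (θ x t) + u x t ^ 2 * g₂ (θ x t) * θ_x x t)
        * θ_x x t))
    (B := fun x t => κ * (h (θ x t) * (θ_x x t / v x t))
      + 2 * (u x t * g (θ x t) * (μ * (u_x x t / v x t) - R * (θ x t / v x t)))
      + κ / cv * (u x t ^ 2 * g₁ (θ x t) * (θ_x x t / v x t)))
    (Bx := fun x t => κ * (h₁ (θ x t) * θ_x x t * (θ_x x t / v x t)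
        + h (θ x t) * (θ_xx x t / v x t - θ_x x t * v_x x t / v x t ^ 2))
      + 2 * ((u_x x t * g (θ x t) + u x t * (g₁ (θ x t) * θ_x x t)) *
          (μ * (u_x x t / v x t) - R * (θ x t / v x t))
        + u x t * g (θ x t) *
          accelOf μ R (v x t) (u_xx x t) (u_x x t) (v_x x t) (θ x t) (θ_x x t))
      + κ / cv * ((2 * u x t * u_x x t * g₁ (θ x t) + u x t ^ 2 * (g₂ (θ x t) * θ_x x t))
          * (θ_x x t / v x t)
        + u x t ^ 2 * g₁ (θ x t) * (θ_xx x t / v x t - θ_x x t * v_x x t / v x t ^ 2)))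
    (N := fun x t => (v x t)⁻¹ *
          (2 * R ^ 2 / μ * (g (θ x t) * θ x t ^ 2)
          + (8 * R ^ 2 / κ + R / (2 * cv)) * (g₁ (θ x t) * (u x t ^ 2 * θ x t ^ 2))
          + (8 * μ ^ 2 / κ + 8 * κ / cv ^ 2 + μ / cv + R / (2 * cv))
            * (g₁ (θ x t) * (u x t ^ 2 * u_x x t ^ 2))))
    (P := fun x t => (v x t)⁻¹ * (μ / 2 * g (θ x t) * u_x x t ^ 2
          + κ / 8 * g₁ (θ x t) * θ_x x t ^ 2))
    ?_ ?_ ?_ ?_ ?_ ?_ ?_ h0 ?_ ?_ ?_ ?_ ?_ ?_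
  · intro x
    have h1 := S.cont_u x
    have h2 := cH.comp (S.cont_θ x)
    have h3 := cg.comp (S.cont_θ x)
    exact ((h2.const_mul cv).add ((h1.pow 2).mul h3)).continuousOn
  · intro x t ht
    have h1 := ((G.dH _).comp t (S.dθ_t x t ht)).const_mul cv
    have h2 := ((S.du_t x t ht).fun_pow 2).fun_mul ((G.dg _).comp t (S.dθ_t x t ht))
    refine (h1.fun_add h2).congr_deriv ?_
    generalize accelOf μ R (v x t) (u_xx x t) (u_x x t) (v_x x t) (θ x t) (θ_x x t) = U
    generalize heatOf μ κ R (v x t) (u_x x t) (v_x x t) (θ x t) (θ_x x t) (θ_xx x t) = E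
    simp
    field_simp
    ring
  · intro x t
    have hv' := (hv x t).ne'
    have h1 := (((G.dh _).comp x (S.dθ_x x t)).fun_mul
      ((S.dθ_xx x t).fun_div (S.dv_x x t) hv')).const_mul κ
    have h2 := (((S.du_x x t).fun_mul ((G.dg _).comp x (S.dθ_x x t))).fun_mul
      ((((S.du_xx x t).fun_div (S.dv_x x t) hv').const_mul μ).fun_sub
        (((S.dθ_x x t).fun_div (S.dv_x x t) hv').const_mul R))).const_mul 2
    have h3 := ((((S.du_x x t).fun_pow 2).fun_mul ((G.dg₁ _).comp x (S.dθ_x x t))).fun_mul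
      ((S.dθ_xx x t).fun_div (S.dv_x x t) hv')).const_mul (κ / cv)
    refine ((h1.fun_add h2).fun_add h3).congr_deriv ?_
    simp [accelOf]
    field_simp
  · have t1 := S.integrable_mul_heat hK (f := fun x t => h (θ x t)) htwo htop
    have t2 := S.integrable_mul_accel hK (f := fun x t => 2 * (g (θ x t) * u x t)) ugtwo ugtop
    have t3 := S.integrable_mul_heat hK
      (f := fun x t => cv⁻¹ * (u x t * g₁ (θ x t) * u x t)) uugtwo uugtop
    exact (t1.add t2).add t3
  · have t1 := (integrable_top_mul (memLp_top_mul htop iv)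
      (integrable_two_two S.mu_x S.mu_x)).const_mul μ
    have t2 := (integrable_top_mul (memLp_top_mul θtop iv)
      (integrable_two_two htwo S.mu_x)).const_mul R
    have t3 := (integrable_top_mul (memLp_top_mul h₁top iv)
      (integrable_two_two S.mθ_x S.mθ_x)).const_mul κ
    have t4 := (integrable_top_mul (memLp_top_mul gtop iv)
      (integrable_two_two S.mu_x S.mu_x)).const_mul (2 * μ)
    have t5 := (integrable_top_mul (memLp_top_mul θtop iv)
      (integrable_two_two gtwo S.mu_x)).const_mul (2 * R)
    have t6 := (integrable_top_mul (memLp_top_mul (memLp_top_mul utop g₁top) iv)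
      (integrable_two_two S.mu_x S.mθ_x)).const_mul (2 * μ)
    have t7 := (integrable_top_mul (memLp_top_mul (memLp_top_mul θtop g₁top) iv)
      (integrable_two_two S.mu S.mθ_x)).const_mul (2 * R)
    have t8 := (integrable_top_mul (memLp_top_mul (memLp_top_mul (memLp_top_mul utop utop) g₁top) iv)
      (integrable_two_two S.mu_x S.mu_x)).const_mul (μ / cv)
    have t9 := (integrable_top_mul (memLp_top_mul (memLp_top_mul (memLp_top_mul utop θtop) g₁top) iv)
      (integrable_two_two S.mu S.mu_x)).const_mul (R / cv)
    have t10 := (integrable_top_mul (memLp_top_mul (memLp_top_mul utop g₁top) iv)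
      (integrable_two_two S.mu_x S.mθ_x)).const_mul (2 * κ / cv)
    have t11 := (integrable_top_mul (memLp_top_mul (memLp_top_mul (memLp_top_mul utop utop) g₂top) iv)
      (integrable_two_two S.mθ_x S.mθ_x)).const_mul (κ / cv)
    refine ((((((((((t1.sub t2).sub t3).sub t4).add t5).sub t6).add t7).add t8).sub t9).sub
      t10).sub t11).congr (Eventually.of_forall fun p => ?_)
    simp only [Pi.add_apply, Pi.sub_apply]
    ring
  · have t1 := (integrable_top_mul iv (integrable_two_two htwo S.mθ_x)).const_mul κ
    have t2 := (integrable_top_mul (memLp_top_mul gtop iv)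
      (integrable_two_two S.mu S.mu_x)).const_mul (2 * μ)
    have t3 := (integrable_top_mul (memLp_top_mul θtop iv)
      (integrable_two_two S.mu gtwo)).const_mul (2 * R)
    have t4 := (integrable_top_mul (memLp_top_mul (memLp_top_mul utop g₁top) iv)
      (integrable_two_two S.mu S.mθ_x)).const_mul (κ / cv)
    refine (((t1.add t2).sub t3).add t4).congr (Eventually.of_forall fun p => ?_)
    simp only [Pi.add_apply, Pi.sub_apply]
    ring
  · intro x t
    have hv' := (hv x t).ne'
    simp only [heatOf]
    field_simp
    ring
  · intro x t
    have h1 := G.H_ge (θ x t)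
    have h2 : 0 ≤ H (θ x t) := by
      have := sq_nonneg (max (θ x t - 2) 0)
      linarith
    have h3 := G.g_nonneg (θ x t)
    positivity
  · intro x t
    have := hv x t
    have := G.g_nonneg (θ x t)
    have := G.g₁_nonneg (θ x t)
    positivity
  · intro x t
    have := hv x t
    have := G.g_nonneg (θ x t)
    have := G.g₁_nonneg (θ x t)
    positivity
  · fun_prop
  · fun_prop
  · intro x t
    rw [← mul_sub]
    exact mul_le_mul_of_nonneg_left (truncated_source_le hμ hκ hR hcv (G.g₁_nonneg _)
      (G.g₂_nonneg _) (G.h_nonneg _) (G.h_le _) (G.h₁_ge _)) (inv_nonneg.2 (hv x t).le)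

end IsStripSolution

/-! ### Classical solutions restricted to a strip -/

lemma lintegral_sq_le_of_L2_le {f : ℝ → ℝ} {B : ℝ} (hB : 0 ≤ B) (h : L2 f ≤ ENNReal.ofReal B) :
    ∫⁻ x, ENNReal.ofReal (f x ^ 2) ≤ ENNReal.ofReal (B ^ 2) := by
  rw [lintegral_sq_eq_L2, ENNReal.ofReal_pow hB]
  exact pow_le_pow_left' h 2

/-- The six square integrals controlled by a bound on the sum of the `H¹` norms at time `t`. -/
structure HasSliceBounds (B : ℝ) (v u θ : ℝ → ℝ → ℝ) (t : ℝ) : Prop where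
  v_sq : ∫⁻ x, ENNReal.ofReal ((v x t - 1) ^ 2) ≤ ENNReal.ofReal (B ^ 2)
  v_x_sq : ∫⁻ x, ENNReal.ofReal (pdx v x t ^ 2) ≤ ENNReal.ofReal (B ^ 2)
  u_sq : ∫⁻ x, ENNReal.ofReal (u x t ^ 2) ≤ ENNReal.ofReal (B ^ 2)
  u_x_sq : ∫⁻ x, ENNReal.ofReal (pdx u x t ^ 2) ≤ ENNReal.ofReal (B ^ 2)
  θ_sq : ∫⁻ x, ENNReal.ofReal ((θ x t - 1) ^ 2) ≤ ENNReal.ofReal (B ^ 2)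
  θ_x_sq : ∫⁻ x, ENNReal.ofReal (pdx θ x t ^ 2) ≤ ENNReal.ofReal (B ^ 2)

lemma deriv_slice_sub_one (f : ℝ → ℝ → ℝ) (t : ℝ) :
    deriv (fun x => f x t - 1) = fun x => pdx f x t := by
  funext x
  simp [pdx, deriv_sub_const]

lemma hasSliceBounds_of_H1 {v u θ : ℝ → ℝ → ℝ} {t B : ℝ} (hB : 0 ≤ B)
    (h : H1 (fun x => v x t - 1) + H1 (fun x => u x t) + H1 (fun x => θ x t - 1)
      ≤ ENNReal.ofReal B) : HasSliceBounds B v u θ t := by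
  simp only [H1, deriv_slice_sub_one] at h
  have hu : deriv (fun x => u x t) = fun x => pdx u x t := rfl
  rw [hu] at h
  have h12 := le_self_add.trans h
  have h3 := le_add_self.trans h
  have h1 := le_self_add.trans h12
  have h2 := le_add_self.trans h12
  exact ⟨lintegral_sq_le_of_L2_le hB (le_self_add.trans h1),
    lintegral_sq_le_of_L2_le hB (le_add_self.trans h1),
    lintegral_sq_le_of_L2_le hB (le_self_add.trans h2),
    lintegral_sq_le_of_L2_le hB (le_add_self.trans h2),
    lintegral_sq_le_of_L2_le hB (le_self_add.trans h3),
    lintegral_sq_le_of_L2_le hB (le_add_self.trans h3)⟩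

/-- The nearest point of `[0, T]` to `t` (for `0 ≤ T`). -/
def clampTime (T t : ℝ) : ℝ := max 0 (min t T)

/-- The function `f` frozen in time outside `[0, T]`. -/
def frozen (T : ℝ) (f : ℝ → ℝ → ℝ) : ℝ → ℝ → ℝ := fun x t => f x (clampTime T t)

lemma clampTime_nonneg (T t : ℝ) : 0 ≤ clampTime T t := le_max_left _ _

lemma clampTime_mem {T : ℝ} (hT : 0 ≤ T) (t : ℝ) : clampTime T t ∈ Icc 0 T :=
  ⟨le_max_left _ _, max_le hT (min_le_right _ _)⟩

lemma clampTime_eq {T t : ℝ} (ht : t ∈ Icc 0 T) : clampTime T t = t := by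
  rw [clampTime, min_eq_left ht.2, max_eq_right ht.1]

lemma continuous_clampTime (T : ℝ) : Continuous (clampTime T) := by
  unfold clampTime; fun_prop

lemma continuous_frozen {T : ℝ} {f : ℝ → ℝ → ℝ}
    (hf : ∀ x t : ℝ, 0 ≤ t → DifferentiableAt ℝ (fun s => f x s) t) (x : ℝ) :
    Continuous (frozen T f x) := by
  have h : ContinuousOn (f x) (Ici 0) := fun t ht =>
    (hf x t ht).continuousAt.continuousWithinAt
  exact h.comp_continuous (continuous_clampTime T) fun t => clampTime_nonneg T t

lemma measurable_frozen {T : ℝ} {f : ℝ → ℝ → ℝ}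
    (hx : ∀ t : ℝ, 0 ≤ t → ContDiff ℝ 2 (fun x => f x t))
    (hf : ∀ x t : ℝ, 0 ≤ t → DifferentiableAt ℝ (fun s => f x s) t) :
    Measurable fun p : ℝ × ℝ => frozen T f p.1 p.2 := by
  have h := measurable_uncurry_of_continuous_of_measurable
    (u := fun (x t : ℝ) => frozen T f x t)
    (fun t => (hx _ (clampTime_nonneg T t)).continuous)
    (fun x => (continuous_frozen hf x).measurable)
  exact h

lemma hasDerivAt_frozen {T : ℝ} {f : ℝ → ℝ → ℝ}
    (hf : ∀ x t : ℝ, 0 ≤ t → DifferentiableAt ℝ (fun s => f x s) t) (x : ℝ) {t : ℝ}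
    (ht : t ∈ Ioo 0 T) : HasDerivAt (frozen T f x) (pdt f x t) t := by
  refine (hf x t ht.1.le).hasDerivAt.congr_of_eventuallyEq ?_
  filter_upwards [Ioo_mem_nhds ht.1 ht.2] with s hs
  simp only [frozen, clampTime_eq (Ioo_subset_Icc_self hs)]

lemma hasDerivAt_pdx {f : ℝ → ℝ → ℝ} {t : ℝ} (h : ContDiff ℝ 2 (fun x => f x t)) (x : ℝ) :
    HasDerivAt (fun y => f y t) (pdx f x t) x :=
  ((h.differentiable (by norm_num)) x).hasDerivAt

lemma hasDerivAt_pdx_pdx {f : ℝ → ℝ → ℝ} {t : ℝ} (h : ContDiff ℝ 2 (fun x => f x t)) (x : ℝ) :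
    HasDerivAt (fun y => pdx f y t) (pdx (pdx f) x t) x := by
  have h1 : ContDiff ℝ 1 (deriv fun x => f x t) := by
    have : ContDiff ℝ (1 + 1) (fun x => f x t) := by norm_num; exact h
    exact (contDiff_succ_iff_deriv.1 this).2.2
  exact ((h1.differentiable (by norm_num)) x).hasDerivAt

lemma memLp_frozen {T B : ℝ} {f : ℝ → ℝ → ℝ}
    (hm : Measurable fun p : ℝ × ℝ => frozen T f p.1 p.2)
    (h : ∀ t ∈ Icc 0 T, ∫⁻ x, ENNReal.ofReal (f x t ^ 2) ≤ ENNReal.ofReal B) :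
    MemLp (fun p : ℝ × ℝ => frozen T f p.1 p.2) 2 (stripMeasure T) := by
  refine memLp_two_strip hm ?_
  calc ∫⁻ t in Icc 0 T, ∫⁻ x, ENNReal.ofReal (frozen T f x t ^ 2)
      ≤ ∫⁻ _ in Icc 0 T, ENNReal.ofReal B := by
        refine setLIntegral_mono' measurableSet_Icc fun t ht => ?_
        simpa only [frozen, clampTime_eq ht] using h t ht
    _ < ⊤ := by
        simp only [lintegral_const, Measure.restrict_apply_univ, Real.volume_Icc]
        exact ENNReal.mul_lt_top (by simp) (by simp)

lemma memLp_frozen_of_L2 {T : ℝ} {f : ℝ → ℝ → ℝ} {N : ℝ → ENNReal}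
    (hm : Measurable fun p : ℝ × ℝ => frozen T f p.1 p.2)
    (h : ∀ t ∈ Icc 0 T, L2 (fun x => f x t) ^ 2 ≤ N t)
    (hN : ∫⁻ t in Icc (0 : ℝ) (T + 1), N t < ⊤) :
    MemLp (fun p : ℝ × ℝ => frozen T f p.1 p.2) 2 (stripMeasure T) := by
  refine memLp_two_strip hm (lt_of_le_of_lt ?_ hN)
  calc ∫⁻ t in Icc 0 T, ∫⁻ x, ENNReal.ofReal (frozen T f x t ^ 2)
      ≤ ∫⁻ t in Icc 0 T, N t := by
        refine setLIntegral_mono' measurableSet_Icc fun t ht => ?_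
        simp only [frozen, clampTime_eq ht]
        rw [lintegral_sq_eq_L2]
        exact h t ht
    _ ≤ ∫⁻ t in Icc 0 (T + 1), N t :=
        lintegral_mono_set (Icc_subset_Icc_right (by linarith))

namespace IsClassicalSolution

variable {μ κ R cv : ℝ} {v u θ : ℝ → ℝ → ℝ}

lemma pdt_u_eq (S : IsClassicalSolution μ κ R cv v u θ) (x : ℝ) {t : ℝ} (ht : 0 ≤ t) :
    pdt u x t = accelOf μ R (v x t) (pdx (pdx u) x t) (pdx u x t) (pdx v x t) (θ x t)
      (pdx θ x t) := by
  have hv := (S.v_pos x t ht).ne'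
  have dv := hasDerivAt_pdx (S.smooth_x_v t ht) x
  have d1 : pdx (fun y s => R * θ y s / v y s) x t
      = (R * pdx θ x t * v x t - R * θ x t * pdx v x t) / v x t ^ 2 :=
    (((hasDerivAt_pdx (S.smooth_x_θ t ht) x).const_mul R).fun_div dv hv).deriv
  have d2 : pdx (fun y s => pdx u y s / v y s) x t
      = (pdx (pdx u) x t * v x t - pdx u x t * pdx v x t) / v x t ^ 2 :=
    ((hasDerivAt_pdx_pdx (S.smooth_x_u t ht) x).fun_div dv hv).deriv
  have h := S.eq_momentum x t ht
  rw [d1, d2] at h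
  rw [accelOf, eq_sub_of_add_eq h]
  field_simp

lemma pdt_θ_eq (S : IsClassicalSolution μ κ R cv v u θ) (hcv : 0 < cv) (x : ℝ) {t : ℝ}
    (ht : 0 ≤ t) :
    pdt θ x t = heatOf μ κ R (v x t) (pdx u x t) (pdx v x t) (θ x t) (pdx θ x t)
      (pdx (pdx θ) x t) / cv := by
  have hv := (S.v_pos x t ht).ne'
  have dv := hasDerivAt_pdx (S.smooth_x_v t ht) x
  have d2 : pdx (fun y s => pdx θ y s / v y s) x t
      = (pdx (pdx θ) x t * v x t - pdx θ x t * pdx v x t) / v x t ^ 2 :=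
    ((hasDerivAt_pdx_pdx (S.smooth_x_θ t ht) x).fun_div dv hv).deriv
  have h := S.eq_energy x t ht
  rw [d2] at h
  rw [eq_div_iff hcv.ne', mul_comm, heatOf, eq_sub_of_add_eq h]
  field_simp

lemma abs_u_le (S : IsClassicalSolution μ κ R cv v u θ) {B t : ℝ} (hB : 0 ≤ B) (ht : 0 ≤ t)
    (h : HasSliceBounds B v u θ t) (x : ℝ) : |u x t| ≤ 2 * B := by
  have := sq_le_of_H1 (hasDerivAt_pdx (S.smooth_x_u t ht)) (S.farfield_u t ht) (sq_nonneg B)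
    (sq_nonneg B) (measurable_deriv _) h.u_sq h.u_x_sq x
  exact abs_le_of_sq_le_sq (by nlinarith) (by positivity)

lemma abs_θ_sub_one_le (S : IsClassicalSolution μ κ R cv v u θ) {B t : ℝ} (hB : 0 ≤ B)
    (ht : 0 ≤ t) (h : HasSliceBounds B v u θ t) (x : ℝ) : |θ x t - 1| ≤ 2 * B := by
  have := sq_le_of_H1 (fun x => (hasDerivAt_pdx (S.smooth_x_θ t ht) x).sub_const 1)
    (by simpa using (S.farfield_θ t ht).sub_const 1) (sq_nonneg B)
    (sq_nonneg B) (measurable_deriv _) h.θ_sq h.θ_x_sq x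
  exact abs_le_of_sq_le_sq (by nlinarith) (by positivity)

/-- A volume-bounded classical solution, frozen outside `[0, T]`, is a strip solution. -/
lemma exists_isStripSolution (S : IsClassicalSolution μ κ R cv v u θ) {K T : ℝ} (hcv : 0 < cv)
    (hV : VolBounded K v) (hT : 0 ≤ T) :
    ∃ b, IsStripSolution μ κ R cv K T b (frozen T v) (frozen T u) (frozen T θ)
      (frozen T (pdx v)) (frozen T (pdx u)) (frozen T (pdx θ))
      (frozen T (pdx (pdx u))) (frozen T (pdx (pdx θ))) := by
  obtain ⟨B₀, hB₀⟩ := S.reg_H1 T hT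
  set B := max B₀ 0
  have hB : 0 ≤ B := le_max_right _ _
  have sl : ∀ t ∈ Icc 0 T, HasSliceBounds B v u θ t := fun t ht =>
    hasSliceBounds_of_H1 hB ((hB₀ t ht).trans (ENNReal.ofReal_le_ofReal (le_max_left _ _)))
  have n : ∀ t, 0 ≤ clampTime T t := clampTime_nonneg T
  have cm : ∀ t, clampTime T t ∈ Icc 0 T := clampTime_mem hT
  have mv : Measurable fun p : ℝ × ℝ => frozen T v p.1 p.2 :=
    measurable_frozen S.smooth_x_v S.smooth_t_v
  have mu : Measurable fun p : ℝ × ℝ => frozen T u p.1 p.2 :=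
    measurable_frozen S.smooth_x_u S.smooth_t_u
  have mθ : Measurable fun p : ℝ × ℝ => frozen T θ p.1 p.2 :=
    measurable_frozen S.smooth_x_θ S.smooth_t_θ
  have dv : ∀ x t, HasDerivAt (fun y => frozen T v y t) (frozen T (pdx v) x t) x :=
    fun x t => hasDerivAt_pdx (S.smooth_x_v _ (n t)) x
  have du : ∀ x t, HasDerivAt (fun y => frozen T u y t) (frozen T (pdx u) x t) x :=
    fun x t => hasDerivAt_pdx (S.smooth_x_u _ (n t)) x
  have dθ : ∀ x t, HasDerivAt (fun y => frozen T θ y t) (frozen T (pdx θ) x t) x :=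
    fun x t => hasDerivAt_pdx (S.smooth_x_θ _ (n t)) x
  have duu : ∀ x t, HasDerivAt (fun y => frozen T (pdx u) y t) (frozen T (pdx (pdx u)) x t) x :=
    fun x t => hasDerivAt_pdx_pdx (S.smooth_x_u _ (n t)) x
  have dθθ : ∀ x t, HasDerivAt (fun y => frozen T (pdx θ) y t) (frozen T (pdx (pdx θ)) x t) x :=
    fun x t => hasDerivAt_pdx_pdx (S.smooth_x_θ _ (n t)) x
  have mux := measurable_of_hasDerivAt mu du
  have mθx := measurable_of_hasDerivAt mθ dθ
  have hH2 := S.reg_H2 (T + 1) (by linarith)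
  have fr : ∀ (f : ℝ → ℝ → ℝ) (x : ℝ) {t : ℝ}, t ∈ Ioo 0 T → frozen T f x t = f x t :=
    fun f x t ht => by simp only [frozen, clampTime_eq (Ioo_subset_Icc_self ht)]
  refine ⟨1 + 2 * B,
    { v_lo := fun x t => (hV x _ (n t)).1
      v_hi := fun x t => (hV x _ (n t)).2
      θ_pos := fun x t => S.θ_pos x _ (n t)
      u_bd := fun x t => (S.abs_u_le hB (n t) (sl _ (cm t)) x).trans (by linarith)
      θ_le := fun x t => by
        have := (le_abs_self _).trans (S.abs_θ_sub_one_le hB (n t) (sl _ (cm t)) x)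
        simp only [frozen]
        linarith
      dv_x := dv
      du_x := du
      dθ_x := dθ
      du_xx := duu
      dθ_xx := dθθ
      cont_v := continuous_frozen S.smooth_t_v
      cont_u := continuous_frozen S.smooth_t_u
      cont_θ := continuous_frozen S.smooth_t_θ
      dv_t := fun x t ht => by
        rw [fr _ _ ht, ← S.eq_mass x t ht.1.le]
        exact hasDerivAt_frozen S.smooth_t_v x ht
      du_t := fun x t ht => by
        simp only [fr _ _ ht]
        rw [← S.pdt_u_eq x ht.1.le]
        exact hasDerivAt_frozen S.smooth_t_u x ht
      dθ_t := fun x t ht => by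
        simp only [fr _ _ ht]
        rw [← S.pdt_θ_eq hcv x ht.1.le]
        exact hasDerivAt_frozen S.smooth_t_θ x ht
      meas_v := mv
      meas_u := mu
      meas_θ := mθ
      mv := memLp_frozen (f := fun x t => v x t - 1) (mv.sub_const 1) fun t ht => (sl t ht).v_sq
      mv_x := memLp_frozen (measurable_of_hasDerivAt mv dv) fun t ht => (sl t ht).v_x_sq
      mu := memLp_frozen mu fun t ht => (sl t ht).u_sq
      mu_x := memLp_frozen mux fun t ht => (sl t ht).u_x_sq
      mu_xx := memLp_frozen_of_L2 (measurable_of_hasDerivAt mux duu) (fun t _ => ?_) hH2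
      mθ := memLp_frozen (f := fun x t => θ x t - 1) (mθ.sub_const 1) fun t ht => (sl t ht).θ_sq
      mθ_x := memLp_frozen mθx fun t ht => (sl t ht).θ_x_sq
      mθ_xx := memLp_frozen_of_L2 (measurable_of_hasDerivAt mθx dθθ) (fun t _ => ?_) hH2 }⟩
  · refine le_trans ?_ le_self_add
    exact pow_le_pow_left' le_add_self 2
  · refine le_trans ?_ le_add_self
    refine pow_le_pow_left' ?_ 2
    rw [H2, deriv_slice_sub_one]
    exact le_add_self

end IsClassicalSolution

/-! ### From the balance laws to the estimate -/

/-- The bound provided by `basic_estimate` for `(M, m)`-bounded data. -/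
noncomputable def energyBound (R cv K M m : ℝ) : ℝ :=
  2⁻¹ * M ^ 2 + R * K * M ^ 2 + cv / m * M ^ 2

/-- The constant in front of `sup (θ - 3/2)₊²` times the energy density. -/
noncomputable def supCoeff (μ κ R cv K : ℝ) : ℝ :=
  K * (49 * (2 * R ^ 2 / μ * (50 / cv) + 2 * (8 * R ^ 2 / κ + R / (2 * cv))))

/-- The constant in front of `u² u_x²` produced by `truncated_balance`. -/
noncomputable def kineticCoeff (μ κ R cv K : ℝ) : ℝ :=
  K * (8 * μ ^ 2 / κ + 8 * κ / cv ^ 2 + μ / cv + R / (2 * cv))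

/-- On the support of the truncation `θ ≤ 7 (θ - 3/2)₊`. -/
lemma sq_le_of_large {y : ℝ} (hy : 7 / 4 ≤ y) : y ^ 2 ≤ 49 * max (y - 3 / 2) 0 ^ 2 := by
  rw [max_eq_left (by linarith)]
  nlinarith

lemma IsTruncation.g_mul_sq_le {g g₁ g₂ H h h₁ : ℝ → ℝ} (G : IsTruncation g g₁ g₂ H h h₁) (y : ℝ) :
    g y * y ^ 2 ≤ 49 * (max (y - 3 / 2) 0 ^ 2 * largePart y) := by
  have h0 := G.g_nonneg y
  have h1 := G.g_le y
  rcases le_or_gt (7 / 4) y with hy | hy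
  · have h2 := sq_le_of_large hy
    rw [largePart, if_pos hy]
    rw [max_eq_left (by linarith)] at h1
    calc g y * y ^ 2 ≤ y * (49 * max (y - 3 / 2) 0 ^ 2) := by gcongr; linarith
      _ = _ := by ring
  · rw [max_eq_right (by linarith)] at h1
    rw [le_antisymm h1 h0, zero_mul]
    have := largePart_nonneg y
    positivity

lemma IsTruncation.g₁_mul_sq_le {g g₁ g₂ H h h₁ : ℝ → ℝ} (G : IsTruncation g g₁ g₂ H h h₁)
    (y : ℝ) : g₁ y * y ^ 2 ≤ 49 * max (y - 3 / 2) 0 ^ 2 := by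
  rcases le_or_gt (7 / 4) y with hy | hy
  · calc g₁ y * y ^ 2 ≤ 1 * (49 * max (y - 3 / 2) 0 ^ 2) := by
          gcongr
          · exact G.g₁_le y
          · exact sq_le_of_large hy
      _ = _ := one_mul _
  · rw [G.g₁_zero y hy.le, zero_mul]
    positivity

lemma lintegral_strip {T : ℝ} {f : ℝ → ℝ → ℝ} (hf : Measurable fun p : ℝ × ℝ => f p.1 p.2) :
    ∫⁻ p, ENNReal.ofReal (f p.1 p.2) ∂(stripMeasure T)
      = ∫⁻ t in Icc 0 T, ∫⁻ x, ENNReal.ofReal (f x t) :=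
  lintegral_prod_symm' _ hf.ennreal_ofReal

namespace IsStripSolution

variable {μ κ R cv K T b : ℝ} {v u θ v_x u_x θ_x u_xx θ_xx : ℝ → ℝ → ℝ}

/-- The density `c_v H(θ) + u² g(θ)` is initially controlled by the `H¹` size of the data. -/
lemma initial_density (S : IsStripSolution μ κ R cv K T b v u θ v_x u_x θ_x u_xx θ_xx)
    (hcv : 0 < cv) {g g₁ g₂ H h h₁ : ℝ → ℝ} (G : IsTruncation g g₁ g₂ H h h₁) {M : ℝ}
    (hM : 0 < M)
    (iu : ∫⁻ x, ENNReal.ofReal (u x 0 ^ 2) ≤ ENNReal.ofReal (M ^ 2))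
    (iθ : ∫⁻ x, ENNReal.ofReal ((θ x 0 - 1) ^ 2) ≤ ENNReal.ofReal (M ^ 2))
    (bθ : ∀ x, |θ x 0 - 1| ≤ 2 * M) :
    (Integrable fun x => cv * H (θ x 0) + u x 0 ^ 2 * g (θ x 0)) ∧
    ∫⁻ x, ENNReal.ofReal (cv * H (θ x 0) + u x 0 ^ 2 * g (θ x 0))
      ≤ ENNReal.ofReal (cv * M ^ 2 + 2 * M * M ^ 2) := by
  have mu := measurable_slice S.du_x 0
  have mθ := measurable_slice S.dθ_x 0
  have mg := (IsTruncation.continuous G.dg).measurable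
  have mH := (IsTruncation.continuous G.dH).measurable
  have hmax : ∀ y : ℝ, max (y - 7 / 4) 0 ≤ |y - 1| := fun y =>
    max_le (by linarith [le_abs_self (y - 1)]) (abs_nonneg _)
  have hpt : ∀ x, cv * H (θ x 0) + u x 0 ^ 2 * g (θ x 0)
      ≤ cv * (θ x 0 - 1) ^ 2 + 2 * M * u x 0 ^ 2 := by
    intro x
    have h1 : H (θ x 0) ≤ (θ x 0 - 1) ^ 2 := by
      refine (G.H_le _).trans ?_
      rw [← sq_abs (θ x 0 - 1)]
      exact pow_le_pow_left₀ (le_max_right _ _) (hmax _) 2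
    have h2 : g (θ x 0) ≤ 2 * M := (G.g_le _).trans ((hmax _).trans (bθ x))
    have h3 := mul_le_mul_of_nonneg_left h1 hcv.le
    have h4 := mul_le_mul_of_nonneg_left h2 (sq_nonneg (u x 0))
    linarith
  have hle : ∫⁻ x, ENNReal.ofReal (cv * H (θ x 0) + u x 0 ^ 2 * g (θ x 0))
      ≤ ENNReal.ofReal (cv * M ^ 2 + 2 * M * M ^ 2) := by
    calc _ ≤ ∫⁻ x, (ENNReal.ofReal (cv * (θ x 0 - 1) ^ 2)
            + ENNReal.ofReal (2 * M * u x 0 ^ 2)) := by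
          refine lintegral_mono fun x => ?_
          rw [← ENNReal.ofReal_add (by positivity) (by positivity)]
          exact ENNReal.ofReal_le_ofReal (hpt x)
      _ = ENNReal.ofReal cv * (∫⁻ x, ENNReal.ofReal ((θ x 0 - 1) ^ 2))
            + ENNReal.ofReal (2 * M) * ∫⁻ x, ENNReal.ofReal (u x 0 ^ 2) := by
          rw [lintegral_add_left (by fun_prop), lintegral_ofReal_const_mul _ hcv.le,
            lintegral_ofReal_const_mul _ (by positivity)]
      _ ≤ ENNReal.ofReal cv * ENNReal.ofReal (M ^ 2)
            + ENNReal.ofReal (2 * M) * ENNReal.ofReal (M ^ 2) := by gcongr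
      _ = _ := by
          rw [← ENNReal.ofReal_mul hcv.le, ← ENNReal.ofReal_mul (by positivity),
            ← ENNReal.ofReal_add (by positivity) (by positivity)]
  refine ⟨(lintegral_ofReal_ne_top_iff_integrable ?_ (Eventually.of_forall fun x => ?_)).1
    (ne_top_of_le_ne_top ENNReal.ofReal_ne_top hle), hle⟩
  · exact (((mH.comp mθ).const_mul cv).add
      ((mu.pow_const 2).mul (mg.comp mθ))).aestronglyMeasurable
  · have h1 := G.g_nonneg (θ x 0)
    have h2 : 0 ≤ H (θ x 0) := by
      have := (sq_nonneg _).trans (G.H_ge (θ x 0))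
      linarith
    simp only [Pi.zero_apply]
    positivity

/-- The right-hand side of `truncated_balance`: the factor `θ²` goes into the supremum of
`(θ - 3/2)₊²`, and what remains is bounded by the basic energy. -/
lemma gain_le (S : IsStripSolution μ κ R cv K T b v u θ v_x u_x θ_x u_xx θ_xx)
    (hμ : 0 < μ) (hκ : 0 < κ) (hR : 0 < R) (hcv : 0 < cv) (hK : 0 < K)
    {g g₁ g₂ H h h₁ : ℝ → ℝ} (G : IsTruncation g g₁ g₂ H h h₁) {E : ℝ}
    (he : ∀ t ∈ Icc 0 T, ∫⁻ x, ENNReal.ofReal (u x t ^ 2 / 2 + cv / 50 * largePart (θ x t))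
      ≤ ENNReal.ofReal E) :
    ∫⁻ p, ENNReal.ofReal ((v p.1 p.2)⁻¹ *
          (2 * R ^ 2 / μ * (g (θ p.1 p.2) * θ p.1 p.2 ^ 2)
          + (8 * R ^ 2 / κ + R / (2 * cv)) * (g₁ (θ p.1 p.2) * (u p.1 p.2 ^ 2 * θ p.1 p.2 ^ 2))
          + (8 * μ ^ 2 / κ + 8 * κ / cv ^ 2 + μ / cv + R / (2 * cv))
            * (g₁ (θ p.1 p.2) * (u p.1 p.2 ^ 2 * u_x p.1 p.2 ^ 2)))) ∂(stripMeasure T)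
      ≤ ENNReal.ofReal (supCoeff μ κ R cv K) * (ENNReal.ofReal E *
          ∫⁻ t in Icc 0 T, ⨆ x, ENNReal.ofReal (max (θ x t - 3 / 2) 0 ^ 2))
        + ENNReal.ofReal (kineticCoeff μ κ R cv K) *
          ∫⁻ t in Icc 0 T, ∫⁻ x, ENNReal.ofReal (u x t ^ 2 * u_x x t ^ 2) := by
  have mu := S.meas_u
  have mθ := S.meas_θ
  have mux := S.meas_u_x
  have mL := measurable_largePart
  have hs : 0 ≤ supCoeff μ κ R cv K := by unfold supCoeff; positivity
  have hk : 0 ≤ kineticCoeff μ κ R cv K := by unfold kineticCoeff; positivity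
  have hpt : ∀ x t, (v x t)⁻¹ *
          (2 * R ^ 2 / μ * (g (θ x t) * θ x t ^ 2)
          + (8 * R ^ 2 / κ + R / (2 * cv)) * (g₁ (θ x t) * (u x t ^ 2 * θ x t ^ 2))
          + (8 * μ ^ 2 / κ + 8 * κ / cv ^ 2 + μ / cv + R / (2 * cv))
            * (g₁ (θ x t) * (u x t ^ 2 * u_x x t ^ 2)))
      ≤ supCoeff μ κ R cv K * (max (θ x t - 3 / 2) 0 ^ 2
          * (u x t ^ 2 / 2 + cv / 50 * largePart (θ x t)))
        + kineticCoeff μ κ R cv K * (u x t ^ 2 * u_x x t ^ 2) := by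
    intro x t
    have a1 := G.g_mul_sq_le (θ x t)
    have a2 := G.g₁_mul_sq_le (θ x t)
    have a3 := G.g₁_le (θ x t)
    have a4 := G.g₁_nonneg (θ x t)
    have a5 := G.g_nonneg (θ x t)
    have aL := largePart_nonneg (θ x t)
    set q := max (θ x t - 3 / 2) 0 ^ 2
    have hq : 0 ≤ q := sq_nonneg _
    set L := largePart (θ x t)
    have b2 : g₁ (θ x t) * (u x t ^ 2 * θ x t ^ 2) ≤ 49 * q * u x t ^ 2 := by
      have := mul_le_mul_of_nonneg_right a2 (sq_nonneg (u x t))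
      linarith
    have b3 : g₁ (θ x t) * (u x t ^ 2 * u_x x t ^ 2) ≤ u x t ^ 2 * u_x x t ^ 2 :=
      mul_le_of_le_one_left (by positivity) a3
    have b4 : 49 * (q * L) ≤ (49 * (50 / cv)) * (q * (u x t ^ 2 / 2 + cv / 50 * L)) := by
      have : (49 * (50 / cv)) * (q * (u x t ^ 2 / 2 + cv / 50 * L))
          = 49 * (q * L) + 49 * (50 / cv) * q * u x t ^ 2 / 2 := by field_simp; ring
      rw [this]
      have : 0 ≤ 49 * (50 / cv) * q * u x t ^ 2 / 2 := by positivity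
      linarith
    have b5 : 49 * q * u x t ^ 2 ≤ 98 * (q * (u x t ^ 2 / 2 + cv / 50 * L)) := by
      have : 0 ≤ q * (cv / 50 * L) := by positivity
      linarith
    have b6 := a1.trans b4
    have b7 := b2.trans b5
    have hv := S.inv_v_le hK x t
    have hθ := S.θ_pos x t
    set e := q * (u x t ^ 2 / 2 + cv / 50 * L)
    set f₁ := g (θ x t) * θ x t ^ 2
    set f₂ := g₁ (θ x t) * (u x t ^ 2 * θ x t ^ 2)
    set f₃ := g₁ (θ x t) * (u x t ^ 2 * u_x x t ^ 2)
    have n₁ : 0 ≤ f₁ := by positivity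
    have n₂ : 0 ≤ f₂ := by positivity
    have n₃ : 0 ≤ f₃ := by positivity
    calc _ ≤ K * (2 * R ^ 2 / μ * ((49 * (50 / cv)) * e)
          + (8 * R ^ 2 / κ + R / (2 * cv)) * (98 * e)
          + (8 * μ ^ 2 / κ + 8 * κ / cv ^ 2 + μ / cv + R / (2 * cv))
            * (u x t ^ 2 * u_x x t ^ 2)) := by
          refine mul_le_mul hv ?_ (by positivity) hK.le
          gcongr ?_ * ?_ + ?_ * ?_ + ?_ * ?_
      _ = _ := by unfold supCoeff kineticCoeff; ring
  calc _ ≤ ∫⁻ p, (ENNReal.ofReal (supCoeff μ κ R cv K * (max (θ p.1 p.2 - 3 / 2) 0 ^ 2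
          * (u p.1 p.2 ^ 2 / 2 + cv / 50 * largePart (θ p.1 p.2))))
        + ENNReal.ofReal (kineticCoeff μ κ R cv K * (u p.1 p.2 ^ 2 * u_x p.1 p.2 ^ 2)))
          ∂(stripMeasure T) := by
        refine lintegral_mono fun p => ?_
        have := largePart_nonneg (θ p.1 p.2)
        rw [← ENNReal.ofReal_add (by positivity) (by positivity)]
        exact ENNReal.ofReal_le_ofReal (hpt p.1 p.2)
    _ = ENNReal.ofReal (supCoeff μ κ R cv K) * (∫⁻ t in Icc 0 T, ∫⁻ x,
          ENNReal.ofReal (max (θ x t - 3 / 2) 0 ^ 2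
            * (u x t ^ 2 / 2 + cv / 50 * largePart (θ x t))))
        + ENNReal.ofReal (kineticCoeff μ κ R cv K) *
          ∫⁻ t in Icc 0 T, ∫⁻ x, ENNReal.ofReal (u x t ^ 2 * u_x x t ^ 2) := by
        rw [lintegral_add_right _ (by fun_prop), lintegral_ofReal_const_mul _ hs,
          lintegral_ofReal_const_mul _ hk,
          lintegral_strip (f := fun x t => u x t ^ 2 * u_x x t ^ 2) (by fun_prop),
          lintegral_strip (f := fun x t => max (θ x t - 3 / 2) 0 ^ 2
            * (u x t ^ 2 / 2 + cv / 50 * largePart (θ x t))) (by fun_prop)]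
    _ ≤ _ := by
        refine add_le_add_left (mul_le_mul_right ?_ _) _
        rw [← lintegral_const_mul' _ _ ENNReal.ofReal_ne_top]
        refine setLIntegral_mono' measurableSet_Icc fun t ht => ?_
        have hmu := measurable_slice S.du_x t
        have hmθ := measurable_slice S.dθ_x t
        calc _ ≤ ∫⁻ x, (⨆ y, ENNReal.ofReal (max (θ y t - 3 / 2) 0 ^ 2)) *
              ENNReal.ofReal (u x t ^ 2 / 2 + cv / 50 * largePart (θ x t)) := by
              refine lintegral_mono fun x => ?_
              rw [ENNReal.ofReal_mul (sq_nonneg _)]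
              gcongr
              exact le_iSup (fun y => ENNReal.ofReal (max (θ y t - 3 / 2) 0 ^ 2)) x
          _ = (⨆ y, ENNReal.ofReal (max (θ y t - 3 / 2) 0 ^ 2)) *
              ∫⁻ x, ENNReal.ofReal (u x t ^ 2 / 2 + cv / 50 * largePart (θ x t)) :=
              lintegral_const_mul _ (by fun_prop)
          _ ≤ _ := by
              rw [mul_comm (ENNReal.ofReal E)]
              gcongr
              exact he t ht

/-- For `θ ≥ 2` the dissipation comes from `truncated_balance`, for `θ ≤ 2` from the basic
energy. -/
lemma dissipation_le (S : IsStripSolution μ κ R cv K T b v u θ v_x u_x θ_x u_xx θ_xx)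
    (hμ : 0 < μ) (hκ : 0 < κ) (hK : 0 < K)
    {g g₁ g₂ H h h₁ : ℝ → ℝ} (G : IsTruncation g g₁ g₂ H h h₁) :
    ∫⁻ t in Icc 0 T, ∫⁻ x, ENNReal.ofReal (θ x t * u_x x t ^ 2 + θ_x x t ^ 2)
      ≤ ENNReal.ofReal (K * (400 / μ + 200 / κ)) *
        (∫⁻ p, ENNReal.ofReal ((v p.1 p.2)⁻¹ * (μ / 2 * g (θ p.1 p.2) * u_x p.1 p.2 ^ 2
          + κ / 8 * g₁ (θ p.1 p.2) * θ_x p.1 p.2 ^ 2)) ∂(stripMeasure T))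
      + ENNReal.ofReal (18 * K / min μ κ) *
        ∫⁻ p, ENNReal.ofReal (min μ κ / (9 * K) *
          (if θ p.1 p.2 ≤ 2 then u_x p.1 p.2 ^ 2 + θ_x p.1 p.2 ^ 2 else 0)) ∂(stripMeasure T) := by
  have mv := S.meas_v
  have mθ := S.meas_θ
  have mux := S.meas_u_x
  have mθx := S.meas_θ_x
  have mg := (IsTruncation.continuous G.dg).measurable
  have mg₁ := (IsTruncation.continuous G.dg₁).measurable
  have hmin : 0 < min μ κ := lt_min hμ hκ
  have c1 : 0 ≤ K * (400 / μ + 200 / κ) := by positivity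
  have c2 : 0 ≤ 18 * K / min μ κ := by positivity
  rw [← lintegral_strip (f := fun x t => θ x t * u_x x t ^ 2 + θ_x x t ^ 2) (by fun_prop),
    ← lintegral_ofReal_const_mul _ c1, ← lintegral_ofReal_const_mul _ c2,
    ← lintegral_add_left (by fun_prop)]
  refine lintegral_mono fun p => ?_
  have hg := G.g_nonneg (θ p.1 p.2)
  have hg₁ := G.g₁_nonneg (θ p.1 p.2)
  have hv := S.v_pos hK p.1 p.2
  have hθ := S.θ_pos p.1 p.2
  have hP : 0 ≤ μ / 2 * g (θ p.1 p.2) * u_x p.1 p.2 ^ 2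
          + κ / 8 * g₁ (θ p.1 p.2) * θ_x p.1 p.2 ^ 2 := by positivity
  have hI : 0 ≤ (if θ p.1 p.2 ≤ 2 then u_x p.1 p.2 ^ 2 + θ_x p.1 p.2 ^ 2 else 0) := by
    split_ifs <;> positivity
  rw [← ENNReal.ofReal_add (by positivity) (by positivity)]
  refine ENNReal.ofReal_le_ofReal ?_
  rcases le_or_gt (θ p.1 p.2) 2 with h2 | h2
  · have e : 18 * K / min μ κ * (min μ κ / (9 * K) * (u_x p.1 p.2 ^ 2 + θ_x p.1 p.2 ^ 2))
        = 2 * (u_x p.1 p.2 ^ 2 + θ_x p.1 p.2 ^ 2) := by field_simp; ring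
    rw [if_pos h2, e]
    have h3 : 0 ≤ K * (400 / μ + 200 / κ) * ((v p.1 p.2)⁻¹ *
      (μ / 2 * g (θ p.1 p.2) * u_x p.1 p.2 ^ 2
          + κ / 8 * g₁ (θ p.1 p.2) * θ_x p.1 p.2 ^ 2)) := by positivity
    have h4 := mul_le_mul_of_nonneg_right h2 (sq_nonneg (u_x p.1 p.2))
    have h5 := sq_nonneg (θ_x p.1 p.2)
    linarith
  · rw [if_neg (not_le.2 h2), mul_zero, mul_zero, add_zero]
    have h3 := mul_le_mul_of_nonneg_right (G.g_ge _ h2.le) (sq_nonneg (u_x p.1 p.2))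
    have h4 := mul_le_mul_of_nonneg_right (G.g₁_ge _ h2.le) (sq_nonneg (θ_x p.1 p.2))
    calc θ p.1 p.2 * u_x p.1 p.2 ^ 2 + θ_x p.1 p.2 ^ 2
        ≤ 200 * g (θ p.1 p.2) * u_x p.1 p.2 ^ 2
          + 25 * g₁ (θ p.1 p.2) * θ_x p.1 p.2 ^ 2 := by linarith
      _ = 400 / μ * (μ / 2 * g (θ p.1 p.2) * u_x p.1 p.2 ^ 2)
          + 200 / κ * (κ / 8 * g₁ (θ p.1 p.2) * θ_x p.1 p.2 ^ 2) := by field_simp; ring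
      _ ≤ (400 / μ + 200 / κ) * (μ / 2 * g (θ p.1 p.2) * u_x p.1 p.2 ^ 2
          + κ / 8 * g₁ (θ p.1 p.2) * θ_x p.1 p.2 ^ 2) := by
          have : 0 ≤ 400 / μ * (κ / 8 * g₁ (θ p.1 p.2) * θ_x p.1 p.2 ^ 2)
            + 200 / κ * (μ / 2 * g (θ p.1 p.2) * u_x p.1 p.2 ^ 2) := by positivity
          linarith
      _ = K * (400 / μ + 200 / κ) * (K⁻¹ * (μ / 2 * g (θ p.1 p.2) * u_x p.1 p.2 ^ 2
          + κ / 8 * g₁ (θ p.1 p.2) * θ_x p.1 p.2 ^ 2)) := by field_simp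
      _ ≤ _ := by
          exact mul_le_mul_of_nonneg_left
            (mul_le_mul_of_nonneg_right (S.le_inv_v hK p.1 p.2) hP) c1

end IsStripSolution

/-- The bound for the truncated energy on `[0, T]`, up to constant factors: initial size, gain from
the supremum of the temperature, and gain from `u² u_x²`. -/
noncomputable def gainBound (μ κ R cv K M m : ℝ) (u θ : ℝ → ℝ → ℝ) (T : ℝ) : ENNReal :=
  ENNReal.ofReal (cv * M ^ 2 + 2 * M * M ^ 2)
    + (ENNReal.ofReal (supCoeff μ κ R cv K) * (ENNReal.ofReal (energyBound R cv K M m) *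
        ∫⁻ t in Icc 0 T, ⨆ x, ENNReal.ofReal (max (θ x t - 3 / 2) 0 ^ 2))
      + ENNReal.ofReal (kineticCoeff μ κ R cv K) *
        ∫⁻ t in Icc 0 T, ∫⁻ x, ENNReal.ofReal (u x t ^ 2 * pdx u x t ^ 2))

lemma gainBound_mono {μ κ R cv K M m : ℝ} {u θ : ℝ → ℝ → ℝ} {s T : ℝ} (h : s ≤ T) :
    gainBound μ κ R cv K M m u θ s ≤ gainBound μ κ R cv K M m u θ T := by
  have hs : Icc 0 s ⊆ Icc 0 T := Icc_subset_Icc_right h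
  unfold gainBound
  gcongr

namespace IsClassicalSolution

variable {μ κ R cv K M m : ℝ} {v u θ : ℝ → ℝ → ℝ}

lemma frozen_zero {T : ℝ} (hT : 0 ≤ T) (f : ℝ → ℝ → ℝ) (x : ℝ) : frozen T f x 0 = f x 0 := by
  rw [frozen, clampTime_eq ⟨le_rfl, hT⟩]

lemma frozen_self {T : ℝ} (hT : 0 ≤ T) (f : ℝ → ℝ → ℝ) (x : ℝ) : frozen T f x T = f x T := by
  rw [frozen, clampTime_eq ⟨hT, le_rfl⟩]

/-- The basic energy estimate for the original solution. -/
lemma energy_le (S : IsClassicalSolution μ κ R cv v u θ)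
    (hμ : 0 < μ) (hκ : 0 < κ) (hR : 0 < R) (hcv : 0 < cv) (hM : 0 < M) (hm : 0 < m) (hK : 0 < K)
    (hI : InitBounded M m v u θ) (hV : VolBounded K v) {T : ℝ} (hT : 0 ≤ T) :
    (∫⁻ x, ENNReal.ofReal (u x T ^ 2 / 2 + cv / 50 * largePart (θ x T)))
      + ∫⁻ p, ENNReal.ofReal (min μ κ / (9 * K) * (if frozen T θ p.1 p.2 ≤ 2 then
          frozen T (pdx u) p.1 p.2 ^ 2 + frozen T (pdx θ) p.1 p.2 ^ 2 else 0)) ∂(stripMeasure T)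
      ≤ ENNReal.ofReal (energyBound R cv K M m) := by
  obtain ⟨b, hS⟩ := S.exists_isStripSolution hcv hV hT
  have sl := hasSliceBounds_of_H1 hM.le hI.1
  have h := hS.basic_estimate (M := M) hμ hκ hR hcv hK hT hm
    (by simpa only [frozen_zero hT] using hI.2.2) (by simpa only [frozen_zero hT] using sl.v_sq)
    (by simpa only [frozen_zero hT] using sl.u_sq) (by simpa only [frozen_zero hT] using sl.θ_sq)
  simpa only [frozen_self hT, energyBound] using h

/-- The two quantities to be estimated, at a single final time. -/
lemma truncated_estimate (S : IsClassicalSolution μ κ R cv v u θ)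
    (hμ : 0 < μ) (hκ : 0 < κ) (hR : 0 < R) (hcv : 0 < cv) (hM : 0 < M) (hm : 0 < m) (hK : 0 < K)
    (hI : InitBounded M m v u θ) (hV : VolBounded K v) {T : ℝ} (hT : 0 ≤ T) :
    ∫⁻ x, ENNReal.ofReal (max (θ x T - 2) 0 ^ 2)
      ≤ ENNReal.ofReal (100 / cv) * gainBound μ κ R cv K M m u θ T ∧
    ∫⁻ t in Icc 0 T, ∫⁻ x, ENNReal.ofReal (θ x t * pdx u x t ^ 2 + pdx θ x t ^ 2)
      ≤ ENNReal.ofReal (K * (400 / μ + 200 / κ)) * gainBound μ κ R cv K M m u θ T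
        + ENNReal.ofReal (18 * K / min μ κ) * ENNReal.ofReal (energyBound R cv K M m) := by
  obtain ⟨b, hS⟩ := S.exists_isStripSolution hcv hV hT
  obtain ⟨g, g₁, g₂, H, h, h₁, G⟩ := exists_truncation
  have sl := hasSliceBounds_of_H1 hM.le hI.1
  obtain ⟨i0, b0⟩ := hS.initial_density hcv G hM (by simpa only [frozen_zero hT] using sl.u_sq)
    (by simpa only [frozen_zero hT] using sl.θ_sq)
    (by simpa only [frozen_zero hT] using S.abs_θ_sub_one_le hM.le le_rfl sl)
  have fr : ∀ (f : ℝ → ℝ → ℝ) (x : ℝ) {t : ℝ}, t ∈ Icc 0 T → frozen T f x t = f x t :=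
    fun f x t ht => by simp only [frozen, clampTime_eq ht]
  have hgain := hS.gain_le hμ hκ hR hcv hK G (E := energyBound R cv K M m) (fun t ht => by
    simp only [fr _ _ ht]
    exact le_self_add.trans (S.energy_le hμ hκ hR hcv hM hm hK hI hV ht.1))
  have e1 : ∫⁻ t in Icc 0 T, ⨆ x, ENNReal.ofReal (max (frozen T θ x t - 3 / 2) 0 ^ 2)
      = ∫⁻ t in Icc 0 T, ⨆ x, ENNReal.ofReal (max (θ x t - 3 / 2) 0 ^ 2) :=
    setLIntegral_congr_fun measurableSet_Icc fun t ht => by simp only [fr _ _ ht]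
  have e2 : ∫⁻ t in Icc 0 T, ∫⁻ x,
        ENNReal.ofReal (frozen T u x t ^ 2 * frozen T (pdx u) x t ^ 2)
      = ∫⁻ t in Icc 0 T, ∫⁻ x, ENNReal.ofReal (u x t ^ 2 * pdx u x t ^ 2) :=
    setLIntegral_congr_fun measurableSet_Icc fun t ht => by simp only [fr _ _ ht]
  have e3 : ∫⁻ t in Icc 0 T, ∫⁻ x, ENNReal.ofReal
        (frozen T θ x t * frozen T (pdx u) x t ^ 2 + frozen T (pdx θ) x t ^ 2)
      = ∫⁻ t in Icc 0 T, ∫⁻ x, ENNReal.ofReal (θ x t * pdx u x t ^ 2 + pdx θ x t ^ 2) :=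
    setLIntegral_congr_fun measurableSet_Icc fun t ht => by simp only [fr _ _ ht]
  rw [e1, e2] at hgain
  have hbal := (hS.truncated_balance hμ hκ hR hcv hK hT G i0).trans (add_le_add b0 hgain)
  have hX := le_self_add.trans hbal
  have hY := le_add_self.trans hbal
  constructor
  · calc ∫⁻ x, ENNReal.ofReal (max (θ x T - 2) 0 ^ 2)
        ≤ ∫⁻ x, ENNReal.ofReal (100 / cv * (cv * H (frozen T θ x T)
            + frozen T u x T ^ 2 * g (frozen T θ x T))) := by
          refine lintegral_mono fun x => ENNReal.ofReal_le_ofReal ?_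
          simp only [frozen_self hT]
          refine (G.H_ge (θ x T)).trans ?_
          have hg := G.g_nonneg (θ x T)
          have : 0 ≤ 100 / cv * (u x T ^ 2 * g (θ x T)) := by positivity
          have e : 100 / cv * (cv * H (θ x T)) = 100 * H (θ x T) := by field_simp
          rw [mul_add, e]
          linarith
      _ ≤ _ := by
          rw [lintegral_ofReal_const_mul _ (by positivity)]
          exact mul_le_mul_right hX _
  · rw [← e3]
    refine (hS.dissipation_le hμ hκ hK G).trans (add_le_add ?_ ?_)
    · exact mul_le_mul_right hY _
    · exact mul_le_mul_right (le_add_self.trans (S.energy_le hμ hκ hR hcv hM hm hK hI hV hT)) _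

end IsClassicalSolution

/-- intermediate dissipation estimate with the truncated temperature. -/
theorem truncated_temperature_estimate
    (μ κ R cv M m K : ℝ) (hμ : 0 < μ) (hκ : 0 < κ) (hR : 0 < R) (hcv : 0 < cv)
    (hM : 0 < M) (hm : 0 < m) (hK : 1 ≤ K) :
    ∃ C C₂ : ℝ, 0 < C ∧ 0 < C₂ ∧
      ∀ v u θ : ℝ → ℝ → ℝ,
        IsClassicalSolution μ κ R cv v u θ →
        InitBounded M m v u θ →
        VolBounded K v →
        ∀ T : ℝ, 0 < T →
          (⨆ t ∈ Icc (0 : ℝ) T,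
              ∫⁻ x : ℝ, ENNReal.ofReal (max (θ x t - 2) 0 ^ 2))
            + (∫⁻ t in Icc (0 : ℝ) T, ∫⁻ x : ℝ,
                ENNReal.ofReal (θ x t * pdx u x t ^ 2 + pdx θ x t ^ 2))
          ≤ ENNReal.ofReal C
            + ENNReal.ofReal C * (∫⁻ t in Icc (0 : ℝ) T,
                ⨆ x : ℝ, ENNReal.ofReal (max (θ x t - 3 / 2) 0 ^ 2))
            + ENNReal.ofReal C₂ * (∫⁻ t in Icc (0 : ℝ) T, ∫⁻ x : ℝ,
                ENNReal.ofReal (u x t ^ 2 * pdx u x t ^ 2)) := by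
  -- `q` is the sum of the two factors in front of `gainBound`, and `d` bounds the dissipation in
  -- the region `θ ≤ 2`.
  have hK0 : 0 < K := by linarith
  have hmin : 0 < min μ κ := lt_min hμ hκ
  set q := 100 / cv + K * (400 / μ + 200 / κ) with hq
  set E := energyBound R cv K M m with hE
  set d := 18 * K / min μ κ * E with hd
  set I := cv * M ^ 2 + 2 * M * M ^ 2 with hI0
  set s := supCoeff μ κ R cv K with hs
  set k := kineticCoeff μ κ R cv K with hk
  have hq0 : 0 < q := by positivity
  have hE0 : 0 < E := by rw [hE, energyBound]; positivity
  have hd0 : 0 < d := by positivity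
  have hI1 : 0 < I := by positivity
  have hs0 : 0 < s := by rw [hs, supCoeff]; positivity
  have hk0 : 0 < k := by rw [hk, kineticCoeff]; positivity
  refine ⟨q * I + d + q * (s * E), q * k, by positivity, by positivity, ?_⟩
  intro v u θ S hI hV T hT
  have hX : (⨆ t ∈ Icc (0 : ℝ) T, ∫⁻ x : ℝ, ENNReal.ofReal (max (θ x t - 2) 0 ^ 2))
      ≤ ENNReal.ofReal (100 / cv) * gainBound μ κ R cv K M m u θ T :=
    iSup₂_le fun t ht =>
      (S.truncated_estimate hμ hκ hR hcv hM hm hK0 hI hV ht.1).1.trans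
        (mul_le_mul_right (gainBound_mono ht.2) _)
  have hY := (S.truncated_estimate hμ hκ hR hcv hM hm hK0 hI hV hT.le).2
  refine (add_le_add hX hY).trans ?_
  rw [← add_assoc, ← add_mul, ← ENNReal.ofReal_add (by positivity) (by positivity), ← hq,
    ← ENNReal.ofReal_mul (by positivity), ← hE, ← hd, gainBound, ← hI0, ← hs, ← hk, ← hE]
  generalize (∫⁻ t in Icc (0 : ℝ) T, ⨆ x : ℝ, ENNReal.ofReal (max (θ x t - 3 / 2) 0 ^ 2)) = A
  generalize (∫⁻ t in Icc (0 : ℝ) T, ∫⁻ x : ℝ, ENNReal.ofReal (u x t ^ 2 * pdx u x t ^ 2)) = W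
  calc ENNReal.ofReal q * (ENNReal.ofReal I + (ENNReal.ofReal s * (ENNReal.ofReal E * A)
          + ENNReal.ofReal k * W)) + ENNReal.ofReal d
      = ENNReal.ofReal (q * I + d) + ENNReal.ofReal (q * (s * E)) * A
          + ENNReal.ofReal (q * k) * W := by
        rw [ENNReal.ofReal_add (by positivity) hd0.le, ENNReal.ofReal_mul hq0.le,
          ENNReal.ofReal_mul hq0.le, ENNReal.ofReal_mul hs0.le, ENNReal.ofReal_mul hq0.le]
        ring
    _ ≤ _ := by
        have h1 : 0 ≤ q * (s * E) := by positivity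
        have h2 : 0 ≤ q * I := by positivity
        have h3 : q * I + d ≤ q * I + d + q * (s * E) := by linarith
        have h4 : q * (s * E) ≤ q * I + d + q * (s * E) := by linarith
        exact add_le_add_left (add_le_add (ENNReal.ofReal_le_ofReal h3)
          (mul_le_mul_left (ENNReal.ofReal_le_ofReal h4) A)) _
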